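/- arXiv:1708.00910 — 2 statements merged into one kernel-verified Lean document; each statement's English description precedes it below -/
import Mathlib

section
/- Let X be a rearrangement-invariant Banach function space over 𝕋 with Köthe dual X'. Then for every f ∈ X, ‖f‖_X = sup{ |⟨f, p⟩| : p is a trigonometric polynomial with ‖p‖_{X'} ≤ 1 }, where ⟨f,g⟩ = ∫_𝕋 f ḡ dm. -/
open MeasureTheory Filter Topology ComplexConjugate
open scoped ENNReal

noncomputable section

instance fact_two_pi_pos : Fact (0 < 2 * Real.pi) := ⟨by positivity⟩

/-- The unit circle, modelled additively as `ℝ / 2πℤ`. -/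
abbrev 𝕋 := AddCircle (2 * Real.pi)

/-- Normalized Lebesgue (Haar) measure on the circle. -/
def μ : Measure 𝕋 := AddCircle.haarAddCircle

/-- A (quasi-)norm functional on measurable functions on the circle, with values in `ℝ≥0∞`. -/
abbrev NormFn := (𝕋 → ℂ) → ℝ≥0∞

/-- Membership in the function space determined by the norm functional `N`. -/
def MemN (N : NormFn) (f : 𝕋 → ℂ) : Prop :=
  AEStronglyMeasurable f μ ∧ N f < ⊤

/-- The closed unit ball of the space determined by `N`. -/
def unitBall (N : NormFn) : Set (𝕋 → ℂ) :=
  {f | AEStronglyMeasurable f μ ∧ N f ≤ 1}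

/-- The Köthe dual (associate space) norm of `N`. -/
def kdualN (N : NormFn) : NormFn := fun g =>
  ⨆ f : unitBall N, ∫⁻ t, (‖f.1 t * g t‖₊ : ℝ≥0∞) ∂μ

/-- The norm of the space `M(X,Y)` of pointwise multipliers, i.e. the operator norm of
multiplication by `a` from the space of `NX` to the space of `NY`. -/
def multN (NX NY : NormFn) : NormFn := fun a =>
  ⨆ f : unitBall NX, NY (fun t => a t * f.1 t)

/-- The norm of the pointwise product space `X ⊙ Y`. -/
def prodN (NX NY : NormFn) : NormFn := fun h =>
  ⨅ p : {p : (𝕋 → ℂ) × (𝕋 → ℂ) //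
      AEStronglyMeasurable p.1 μ ∧ AEStronglyMeasurable p.2 μ ∧
      h =ᵐ[μ] fun t => p.1 t * p.2 t},
    NX p.1.1 * NY p.1.2

/-- Membership in the Hardy space `H[X]`: membership in `X` together with the vanishing of all
negative Fourier coefficients. -/
def HardyMemN (N : NormFn) (f : 𝕋 → ℂ) : Prop :=
  AEStronglyMeasurable f μ ∧ N f < ⊤ ∧ ∀ n : ℤ, n < 0 → fourierCoeff f n = 0

/-- Operator norm of `T` from the space of `N1` to that of `N2`. -/
def opN (N1 N2 : NormFn) (T : (𝕋 → ℂ) → (𝕋 → ℂ)) : ℝ≥0∞ :=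
  ⨆ f : unitBall N1, N2 (T f.1)

/-- Operator norm of `T` restricted to the Hardy space of `N1`, measured in `N2`. -/
def hardyOpN (N1 N2 : NormFn) (T : (𝕋 → ℂ) → (𝕋 → ℂ)) : ℝ≥0∞ :=
  ⨆ f : {f : 𝕋 → ℂ // HardyMemN N1 f ∧ N1 f ≤ 1}, N2 (T f.1)

/-- `P` is (a realization of) the Riesz projection: it respects a.e. equality and, on integrable
functions, keeps the Fourier coefficients with nonnegative index and kills the others. -/
def IsRieszProj (P : (𝕋 → ℂ) → (𝕋 → ℂ)) : Prop :=
  (∀ f g, f =ᵐ[μ] g → P f =ᵐ[μ] P g) ∧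
  (∀ f g, P (f + g) =ᵐ[μ] P f + P g) ∧
  (∀ (c : ℂ) f, P (fun t => c * f t) =ᵐ[μ] fun t => c * P f t) ∧
  (∀ f, Integrable f μ → Integrable (P f) μ ∧
    ∀ n : ℤ, fourierCoeff (P f) n = if 0 ≤ n then fourierCoeff f n else 0)

/-- The flip operator `(Jf)(t) = t⁻¹ f(t⁻¹)`, written additively on `ℝ/2πℤ`. -/
def Jflip (f : 𝕋 → ℂ) : 𝕋 → ℂ := fun x => fourier (-1) x * f (-x)

/-- The dilation operator `D_s`: `(D_s f)(e^{iθ}) = f(e^{iθs})` for `θs ∈ [0,2π)`, `0` otherwise. -/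
def dilOp (s : ℝ) (f : 𝕋 → ℂ) : 𝕋 → ℂ := fun x =>
  let θ : ℝ := (AddCircle.equivIco (2 * Real.pi) 0 x : ℝ)
  if 0 ≤ s * θ ∧ s * θ < 2 * Real.pi then f ((s * θ : ℝ) : 𝕋) else 0

/-- Operator norm of the dilation `D_s` on the space of `N`. -/
def dilNorm (N : NormFn) (s : ℝ) : ℝ≥0∞ :=
  ⨆ f : unitBall N, N (dilOp s f.1)

/-- `α` is the lower Boyd index of the space of `N`. -/
def boydLower (N : NormFn) (α : ℝ) : Prop :=
  Tendsto (fun s : ℝ => Real.log (dilNorm N (1 / s)).toReal / Real.log s) (𝓝[>] 0) (𝓝 α)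

/-- `β` is the upper Boyd index of the space of `N`. -/
def boydUpper (N : NormFn) (β : ℝ) : Prop :=
  Tendsto (fun s : ℝ => Real.log (dilNorm N (1 / s)).toReal / Real.log s) atTop (𝓝 β)

/-- The space of `N` has nontrivial Boyd indices. -/
def NontrivialBoyd (N : NormFn) : Prop :=
  ∃ α β : ℝ, 0 < α ∧ β < 1 ∧ boydLower N α ∧ boydUpper N β

/-- Trigonometric polynomials. -/
def IsTrigPoly (f : 𝕋 → ℂ) : Prop :=
  ∃ (n : ℕ) (c : ℤ → ℂ), f = fun x => ∑ k ∈ Finset.Icc (-(n : ℤ)) n, c k * fourier k x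

/-- Analytic trigonometric polynomials. -/
def IsAnalyticPoly (f : 𝕋 → ℂ) : Prop :=
  ∃ (n : ℕ) (c : ℕ → ℂ), f = fun x => ∑ k ∈ Finset.range (n + 1), c k * fourier (k : ℤ) x

/-- The Fejér kernel `K_n`. -/
def fejer (n : ℕ) : 𝕋 → ℂ := fun x =>
  ∑ k ∈ Finset.Icc (-(n : ℤ)) n, (1 - (|(k : ℝ)| / (n + 1)) : ℂ) * fourier k x

/-- Convolution with the Fejér kernel, `f * K_n`. -/
def convFejer (n : ℕ) (f : 𝕋 → ℂ) : 𝕋 → ℂ := fun x =>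
  ∫ y, f y * fejer n (x - y) ∂μ

/-- The Banach envelope norm of `N`. -/
def envN (N : NormFn) : NormFn := fun f =>
  ⨅ d : {d : Σ n : ℕ, Fin n → 𝕋 → ℂ // f =ᵐ[μ] fun t => ∑ i, d.2 i t},
    ∑ i, N (d.1.2 i)

/-- The Banach envelope norm of the Hardy space `H[Z]` (decompositions within `H[Z]`). -/
def envHardyN (N : NormFn) : NormFn := fun f =>
  ⨅ d : {d : Σ n : ℕ, Fin n → 𝕋 → ℂ //
      (∀ i, HardyMemN N (d.2 i)) ∧ f =ᵐ[μ] fun t => ∑ i, d.2 i t},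
    ∑ i, N (d.1.2 i)

/-- The norm of the 1/2-concavification `Z^{(1/2)}`: `‖f‖ = ‖|f|^{1/2}‖²`. -/
def concavHalf (N : NormFn) : NormFn := fun f =>
  (N (fun t => (Real.sqrt ‖f t‖ : ℂ))) ^ 2

/-- `dist_{M(X,Y)}(a, conj H[M(X,Y)])`: the infimum of multiplier norms of symbols `b` whose
Fourier coefficients agree with those of `a` for positive indices. -/
def hankelDist (NX NY : NormFn) (a : 𝕋 → ℂ) : ℝ≥0∞ :=
  ⨅ b : {b : 𝕋 → ℂ // AEStronglyMeasurable b μ ∧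
      ∀ k : ℤ, 0 < k → fourierCoeff b k = fourierCoeff a k},
    multN NX NY b.1

/-- The Kuratowski measure of noncompactness of the set `A`, with diameters measured by `N`. -/
def setMNC (N : NormFn) (A : Set (𝕋 → ℂ)) : ℝ≥0∞ :=
  ⨅ d : {d : ℝ≥0∞ // ∃ (n : ℕ) (B : Fin n → Set (𝕋 → ℂ)),
      (∀ f ∈ A, ∃ i, f ∈ B i) ∧
      ∀ i, ∀ f ∈ B i, ∀ g ∈ B i, N (fun t => f t - g t) ≤ d}, d.1

/-- The decreasing rearrangement `f*` of `f`. -/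
def decRearr (f : 𝕋 → ℂ) (s : ℝ) : ℝ≥0∞ :=
  sInf {l : ℝ≥0∞ | μ {t | l < (‖f t‖₊ : ℝ≥0∞)} ≤ ENNReal.ofReal s}

/-- The Lorentz norm `‖f‖_{L^{p,q}}` on the circle (total measure 1). -/
def lorentzN (p q : ℝ≥0∞) : NormFn := fun f =>
  if q = ⊤ then ⨆ s : Set.Ioo (0 : ℝ) 1, decRearr f s.1 * ENNReal.ofReal (s.1 ^ (1 / p).toReal)
  else (∫⁻ s in Set.Ioo (0 : ℝ) 1,
      (decRearr f s * ENNReal.ofReal (s ^ (1 / p).toReal)) ^ q.toReal / ENNReal.ofReal s)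
    ^ (1 / q).toReal

/-- `dist_{L^{p,q}}(a, conj H^{p,q})` expressed via matching of positive Fourier coefficients. -/
def lorDist (p q : ℝ≥0∞) (a : 𝕋 → ℂ) : ℝ≥0∞ :=
  ⨅ b : {b : 𝕋 → ℂ // AEStronglyMeasurable b μ ∧
      ∀ k : ℤ, 0 < k → fourierCoeff b k = fourierCoeff a k},
    lorentzN p q b.1

/-- The analytic polynomial with coefficients `c 0, …, c n`. -/
def aPoly (n : ℕ) (c : ℕ → ℂ) : 𝕋 → ℂ := fun x =>
  ∑ k ∈ Finset.range (n + 1), c k * fourier (k : ℤ) x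

/-- The polynomial `p^c(t) = conj (p(1/t))`, i.e. with conjugated coefficients. -/
def aPolyC (n : ℕ) (c : ℕ → ℂ) : 𝕋 → ℂ := aPoly n fun k => (starRingEnd ℂ) (c k)

/-- A Banach function space over the circle, encoded by its norm functional. -/
structure BFS where
  N : NormFn
  ae_congr : ∀ f g, f =ᵐ[μ] g → N f = N g
  add_le : ∀ f g, N (f + g) ≤ N f + N g
  smul_eq : ∀ (c : ℂ) (f), N (fun t => c * f t) = (‖c‖₊ : ℝ≥0∞) * N f
  ideal : ∀ f g, AEStronglyMeasurable g μ → (∀ᵐ t ∂μ, ‖g t‖ ≤ ‖f t‖) → N g ≤ N f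
  const_finite : N (fun _ => 1) < ⊤
  norm_eq_zero : ∀ f, AEStronglyMeasurable f μ → N f = 0 → f =ᵐ[μ] fun _ => 0
  semiFatou : ∀ (f : ℕ → 𝕋 → ℂ) (g : 𝕋 → ℂ),
    (∀ n, AEStronglyMeasurable (f n) μ) → AEStronglyMeasurable g μ →
    (∀ᵐ t ∂μ, Monotone (fun n => ‖f n t‖) ∧
      Tendsto (fun n => ‖f n t‖) atTop (𝓝 ‖g t‖)) →
    N g < ⊤ → N g = ⨆ n, N (f n)
  complete : ∀ f : ℕ → 𝕋 → ℂ, (∀ n, AEStronglyMeasurable (f n) μ) →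
    (∑' n, N (f n)) < ⊤ →
    ∃ g, AEStronglyMeasurable g μ ∧ N g < ⊤ ∧
      Tendsto (fun n => N (fun t => g t - ∑ k ∈ Finset.range n, f k t)) atTop (𝓝 0)

/-- A quasi-Banach function space over the circle, with quasi-triangle constant `kappa`. -/
structure QBFS where
  N : NormFn
  kappa : ℝ≥0∞
  one_le_kappa : 1 ≤ kappa
  kappa_finite : kappa < ⊤
  ae_congr : ∀ f g, f =ᵐ[μ] g → N f = N g
  add_le : ∀ f g, N (f + g) ≤ kappa * (N f + N g)
  smul_eq : ∀ (c : ℂ) (f), N (fun t => c * f t) = (‖c‖₊ : ℝ≥0∞) * N f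
  ideal : ∀ f g, AEStronglyMeasurable g μ → (∀ᵐ t ∂μ, ‖g t‖ ≤ ‖f t‖) → N g ≤ N f
  const_finite : N (fun _ => 1) < ⊤
  norm_eq_zero : ∀ f, AEStronglyMeasurable f μ → N f = 0 → f =ᵐ[μ] fun _ => 0
  semiFatou : ∀ (f : ℕ → 𝕋 → ℂ) (g : 𝕋 → ℂ),
    (∀ n, AEStronglyMeasurable (f n) μ) → AEStronglyMeasurable g μ →
    (∀ᵐ t ∂μ, Monotone (fun n => ‖f n t‖) ∧
      Tendsto (fun n => ‖f n t‖) atTop (𝓝 ‖g t‖)) →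
    N g < ⊤ → N g = ⨆ n, N (f n)

/-- Rearrangement invariance of the norm functional `N`. -/
def RearrInvN (N : NormFn) : Prop :=
  ∀ f g, AEStronglyMeasurable f μ → AEStronglyMeasurable g μ →
    (∀ lam : ℝ, 0 < lam → μ {t | lam < ‖f t‖} = μ {t | lam < ‖g t‖}) →
    N f = N g

/-- `f` is an order continuous element of the space of `N`. -/
def OrderContElemN (N : NormFn) (f : 𝕋 → ℂ) : Prop :=
  MemN N f ∧ ∀ g : ℕ → 𝕋 → ℂ, (∀ n, AEStronglyMeasurable (g n) μ) →
    (∀ n, ∀ᵐ t ∂μ, ‖g n t‖ ≤ ‖f t‖) →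
    (∀ᵐ t ∂μ, Tendsto (fun n => ‖g n t‖) atTop (𝓝 0)) →
    Tendsto (fun n => N (g n)) atTop (𝓝 0)

/-- The space of `N` is order continuous (equivalently, separable). -/
def OrderContN (N : NormFn) : Prop :=
  ∀ f, MemN N f → OrderContElemN N f

/-- The Fatou property of the norm functional `N`. -/
def FatouN (N : NormFn) : Prop :=
  ∀ (f : ℕ → 𝕋 → ℂ) (g : 𝕋 → ℂ),
    (∀ n, AEStronglyMeasurable (f n) μ) → AEStronglyMeasurable g μ →
    (∀ᵐ t ∂μ, Monotone (fun n => ‖f n t‖) ∧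
      Tendsto (fun n => ‖f n t‖) atTop (𝓝 ‖g t‖)) →
    N g = ⨆ n, N (f n)



instance : IsProbabilityMeasure μ := by unfold μ; infer_instance
instance : μ.IsAddLeftInvariant := by unfold μ; infer_instance
instance : μ.IsAddRightInvariant := by unfold μ; infer_instance
instance : μ.IsNegInvariant := by unfold μ; infer_instance
instance : μ.IsOpenPosMeasure := by unfold μ; infer_instance
instance : μ.Regular := by unfold μ; infer_instance
instance : SFinite μ := inferInstance

/-- Phase of a complex number. -/
def phase (z : ℂ) : ℂ := z / (‖z‖ : ℂ)

lemma phase_norm_le (z : ℂ) : ‖phase z‖ ≤ 1 := by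
  unfold phase
  rw [norm_div, Complex.norm_real, norm_norm]
  exact div_self_le_one _

lemma mul_conj_phase (z : ℂ) : z * (starRingEnd ℂ) (phase z) = (‖z‖ : ℂ) := by
  unfold phase
  by_cases h : z = 0
  · simp [h]
  · have : (‖z‖ : ℂ) ≠ 0 := by simpa using h
    rw [map_div₀, Complex.conj_ofReal, ← mul_div_assoc, Complex.mul_conj, div_eq_iff this,
      Complex.normSq_eq_norm_sq]
    push_cast; ring

lemma conj_mul_phase (z : ℂ) : (starRingEnd ℂ) z * phase z = (‖z‖ : ℂ) := by
  have := congrArg (starRingEnd ℂ) (mul_conj_phase z)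
  simpa using this

lemma measurable_phase : Measurable phase := by unfold phase; fun_prop

lemma N_zero (X : BFS) : X.N (fun _ => 0) = 0 := by
  have := X.smul_eq 0 (fun _ => 0)
  simpa using this

lemma N_bdd (X : BFS) {f : 𝕋 → ℂ} (hf : AEStronglyMeasurable f μ) (C : ℝ)
    (h : ∀ t, ‖f t‖ ≤ C) : X.N f < ⊤ := by
  have h1 := X.ideal (fun _ => (C : ℂ) * 1) f hf (Eventually.of_forall fun t => by
    simpa using (h t).trans (le_abs_self C))
  rw [X.smul_eq] at h1
  exact h1.trans_lt (ENNReal.mul_lt_top (by simp) X.const_finite)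

lemma N_one_pos (X : BFS) : X.N (fun _ => 1) ≠ 0 := by
  intro h
  have := X.norm_eq_zero _ aestronglyMeasurable_const h
  have h2 : ∃ x : 𝕋, (1 : ℂ) = 0 := this.exists
  simp at h2

/-- Closedness of the unit ball. -/
lemma N_closed (X : BFS) (u : ℕ → 𝕋 → ℂ) (h : 𝕋 → ℂ)
    (hu : ∀ n, AEStronglyMeasurable (u n) μ) (hh : AEStronglyMeasurable h μ)
    (hN : ∀ n, X.N (u n) ≤ 1) (hfin : X.N h < ⊤)
    (hlim : ∀ᵐ t ∂μ, Tendsto (fun n => u n t) atTop (𝓝 (h t))) : X.N h ≤ 1 := by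
  have hbdd : ∀ t m, BddBelow (Set.range fun k => ‖u (m + k) t‖) := fun t m =>
    ⟨0, by rintro _ ⟨k, rfl⟩; exact norm_nonneg _⟩
  let v : ℕ → 𝕋 → ℂ := fun m t => ((⨅ k, ‖u (m + k) t‖ : ℝ) : ℂ)
  have hv0 : ∀ m t, 0 ≤ ⨅ k, ‖u (m + k) t‖ := fun m t => le_ciInf fun _ => norm_nonneg _
  have hvn : ∀ m t, ‖v m t‖ = ⨅ k, ‖u (m + k) t‖ := fun m t => by
    simp [v, Complex.norm_real, abs_of_nonneg (hv0 m t)]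
  have hvm : ∀ m, AEStronglyMeasurable (v m) μ := fun m => by
    have : AEMeasurable (fun t => ⨅ k, ‖u (m + k) t‖) μ :=
      AEMeasurable.iInf fun k => (hu _).norm.aemeasurable
    exact (Complex.measurable_ofReal.comp_aemeasurable this).aestronglyMeasurable
  have key := X.semiFatou v h hvm hh (by
    filter_upwards [hlim] with t ht
    simp only [hvn]
    refine ⟨fun a b hab => ?_, ?_⟩
    · refine le_ciInf fun k => ?_
      have := ciInf_le (hbdd t a) (b - a + k)
      rwa [show a + (b - a + k) = b + k by omega] at this
    · have ht' := ht.norm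
      rw [Metric.tendsto_atTop] at ht' ⊢
      intro ε hε
      obtain ⟨M, hM⟩ := ht' (ε / 2) (by positivity)
      refine ⟨M, fun n hn => ?_⟩
      have h1 : (⨅ k, ‖u (n + k) t‖) ≤ ‖u n t‖ := ciInf_le (hbdd t n) 0
      have h2 : ‖h t‖ - ε / 2 ≤ ⨅ k, ‖u (n + k) t‖ := le_ciInf fun k => by
        have := hM (n + k) (by omega)
        rw [Real.dist_eq, abs_lt] at this
        linarith
      have h3 := hM n hn
      rw [Real.dist_eq, abs_lt] at h3 ⊢
      constructor <;> linarith) hfin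
  rw [key]
  refine iSup_le fun m => (X.ideal (u m) (v m) (hvm m) (Eventually.of_forall fun t => ?_)).trans (hN m)
  rw [hvn]
  exact ciInf_le (hbdd t m) 0

lemma kdual_mono (N : NormFn) {g g' : 𝕋 → ℂ} (h : ∀ t, ‖g t‖ ≤ ‖g' t‖) :
    kdualN N g ≤ kdualN N g' := by
  unfold kdualN
  refine iSup_mono fun f => lintegral_mono fun t => ?_
  simp only [nnnorm_mul, ENNReal.coe_mul]
  gcongr
  exact h t

lemma holder (X : BFS) {f g : 𝕋 → ℂ} (hf : MemN X.N f) :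
    ∫⁻ t, (‖f t * g t‖₊ : ℝ≥0∞) ∂μ ≤ X.N f * kdualN X.N g := by
  obtain ⟨hm, hfin⟩ := hf
  by_cases h0 : X.N f = 0
  · have := X.norm_eq_zero f hm h0
    rw [lintegral_congr_ae (g := fun _ => 0) (by
      filter_upwards [this] with t ht; simp [ht])]
    simp
  · set r := (X.N f).toReal with hr
    have hr0 : 0 < r := ENNReal.toReal_pos h0 hfin.ne
    have hmem : (fun t => ((r⁻¹ : ℝ) : ℂ) * f t) ∈ unitBall X.N := by
      refine ⟨hm.const_mul _, ?_⟩
      rw [X.smul_eq]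
      have : (‖((r⁻¹ : ℝ) : ℂ)‖₊ : ℝ≥0∞) = (X.N f)⁻¹ := by
        rw [← enorm_eq_nnnorm, ← ofReal_norm, Complex.norm_real, Real.norm_of_nonneg (by positivity),
          ENNReal.ofReal_inv_of_pos hr0, hr, ENNReal.ofReal_toReal hfin.ne]
      rw [this, ENNReal.inv_mul_cancel h0 hfin.ne]
    have h1 : ∫⁻ t, (‖((r⁻¹ : ℝ) : ℂ) * f t * g t‖₊ : ℝ≥0∞) ∂μ ≤ kdualN X.N g :=
      le_iSup (fun f : unitBall X.N => ∫⁻ t, (‖f.1 t * g t‖₊ : ℝ≥0∞) ∂μ) ⟨_, hmem⟩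
    calc ∫⁻ t, (‖f t * g t‖₊ : ℝ≥0∞) ∂μ
        = ∫⁻ t, X.N f * (‖((r⁻¹ : ℝ) : ℂ) * f t * g t‖₊ : ℝ≥0∞) ∂μ := by
          refine lintegral_congr fun t => ?_
          have : (‖((r⁻¹ : ℝ) : ℂ)‖₊ : ℝ≥0∞) = (X.N f)⁻¹ := by
            rw [← enorm_eq_nnnorm, ← ofReal_norm, Complex.norm_real, Real.norm_of_nonneg (by positivity),
              ENNReal.ofReal_inv_of_pos hr0, hr, ENNReal.ofReal_toReal hfin.ne]
          rw [mul_assoc, nnnorm_mul ((r⁻¹ : ℝ) : ℂ), ENNReal.coe_mul, this, ← mul_assoc,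
            ENNReal.mul_inv_cancel h0 hfin.ne, one_mul]
      _ = X.N f * ∫⁻ t, (‖((r⁻¹ : ℝ) : ℂ) * f t * g t‖₊ : ℝ≥0∞) ∂μ :=
          lintegral_const_mul' _ _ hfin.ne
      _ ≤ _ := by gcongr

lemma N_translate (X : BFS) (hri : RearrInvN X.N) {f : 𝕋 → ℂ} (hf : AEStronglyMeasurable f μ)
    (y : 𝕋) : AEStronglyMeasurable (fun t => f (t + y)) μ ∧ X.N (fun t => f (t + y)) = X.N f := by
  have hmp : MeasurePreserving (fun t : 𝕋 => t + y) μ μ := measurePreserving_add_right μ y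
  have hm : AEStronglyMeasurable (fun t => f (t + y)) μ := hf.comp_measurePreserving hmp
  refine ⟨hm, hri _ _ hm hf fun lam _ => ?_⟩
  have : NullMeasurableSet {t | lam < ‖f t‖} μ :=
    nullMeasurableSet_lt aemeasurable_const hf.norm.aemeasurable
  have h2 := hmp.measure_preimage this
  rw [Set.preimage_ofPred_eq] at h2
  exact h2

lemma kdual_translate (X : BFS) (hri : RearrInvN X.N) {f g : 𝕋 → ℂ} (hf : f ∈ unitBall X.N)
    (y : 𝕋) : ∫⁻ t, (‖f t * g (t - y)‖₊ : ℝ≥0∞) ∂μ ≤ kdualN X.N g := by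
  have h := N_translate X hri hf.1 y
  have h1 : ∫⁻ t, (‖f (t + y) * g t‖₊ : ℝ≥0∞) ∂μ ≤ kdualN X.N g :=
      le_iSup (fun f : unitBall X.N => ∫⁻ t, (‖f.1 t * g t‖₊ : ℝ≥0∞) ∂μ)
        ⟨fun t => f (t + y), h.1, h.2.trans_le hf.2⟩
  refine le_trans (le_of_eq ?_) h1
  rw [← lintegral_add_right_eq_self _ y]
  simp

/-- Truncation. -/
def trunc (n : ℕ) (z : ℂ) : ℂ := if ‖z‖ ≤ n then z else 0

lemma trunc_norm_le (n : ℕ) (z : ℂ) : ‖trunc n z‖ ≤ ‖z‖ := by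
  unfold trunc; split_ifs <;> simp

lemma trunc_norm_le' (n : ℕ) (z : ℂ) : ‖trunc n z‖ ≤ n := by
  unfold trunc; split_ifs with h <;> simp [h]

lemma trunc_mono (z : ℂ) : Monotone fun n => ‖trunc n z‖ := by
  intro a b hab
  have : (a : ℝ) ≤ b := by exact_mod_cast hab
  simp only [trunc]
  split_ifs with h1 h2 <;> simp
  exact absurd (h1.trans this) h2

lemma trunc_eventually (z : ℂ) : ∀ᶠ n : ℕ in atTop, trunc n z = z := by
  obtain ⟨m, hm⟩ := exists_nat_ge ‖z‖
  filter_upwards [eventually_ge_atTop m] with n hn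
  have : (m : ℝ) ≤ n := by exact_mod_cast hn
  simp [trunc, hm.trans this]

lemma trunc_tendsto (z : ℂ) : Tendsto (fun n => ‖trunc n z‖) atTop (𝓝 ‖z‖) := by
  refine tendsto_const_nhds.congr' ?_
  filter_upwards [trunc_eventually z] with n hn
  rw [hn]

lemma measurable_trunc (n : ℕ) : Measurable (trunc n) := by
  unfold trunc
  exact Measurable.ite (measurableSet_le measurable_norm measurable_const) measurable_id measurable_const

/-- monotone convergence for truncations -/
lemma lintegral_trunc {f g : 𝕋 → ℂ} (hf : AEMeasurable f μ) (hg : AEMeasurable g μ) :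
    ∫⁻ t, (‖f t * g t‖₊ : ℝ≥0∞) ∂μ = ⨆ n, ∫⁻ t, (‖trunc n (f t) * g t‖₊ : ℝ≥0∞) ∂μ := by
  rw [← lintegral_iSup']
  · refine lintegral_congr fun t => ?_
    apply le_antisymm
    · obtain ⟨n, hn⟩ := (trunc_eventually (f t)).exists
      refine le_iSup_of_le n ?_
      rw [hn]
    · refine iSup_le fun n => ?_
      simp only [nnnorm_mul, ENNReal.coe_mul]
      gcongr
      exact trunc_norm_le _ _
  · intro n
    exact (((measurable_trunc n).comp_aemeasurable hf).mul hg).enorm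
  · refine Eventually.of_forall fun t a b hab => ?_
    simp only [nnnorm_mul, ENNReal.coe_mul]
    gcongr
    exact trunc_mono (f t) hab

lemma hb (X : BFS) {h : 𝕋 → ℂ} (hh : MemLp h 2 μ) (hfin : X.N h < ⊤) (h1 : 1 < X.N h) :
    ∃ g : 𝕋 → ℂ, Measurable g ∧ MemLp g 2 μ ∧ kdualN X.N g ≤ 1 ∧
      1 < ∫⁻ t, (‖h t * g t‖₊ : ℝ≥0∞) ∂μ := by
  let B : Set (Lp ℂ 2 μ) := {u | X.N u ≤ 1}
  have hBc : Convex ℝ B := by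
    intro u hu v hv a b ha hb hab
    have hu' : X.N u ≤ 1 := hu
    have hv' : X.N v ≤ 1 := hv
    change X.N ((a • u + b • v : Lp ℂ 2 μ) : 𝕋 → ℂ) ≤ 1
    have e : ((a • u + b • v : Lp ℂ 2 μ) : 𝕋 → ℂ) =ᵐ[μ]
        (fun t => (a : ℂ) * u t) + (fun t => (b : ℂ) * v t) := by
      filter_upwards [Lp.coeFn_add (a • u) (b • v), Lp.coeFn_smul a u, Lp.coeFn_smul b v]
        with t h1 h2 h3
      rw [h1, Pi.add_apply, h2, h3]
      simp
    rw [X.ae_congr _ _ e]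
    refine (X.add_le _ _).trans ?_
    rw [X.smul_eq, X.smul_eq]
    have ea : (‖(a : ℂ)‖₊ : ℝ≥0∞) = ENNReal.ofReal a := by
      rw [← enorm_eq_nnnorm, ← ofReal_norm, Complex.norm_real, Real.norm_of_nonneg ha]
    have eb : (‖(b : ℂ)‖₊ : ℝ≥0∞) = ENNReal.ofReal b := by
      rw [← enorm_eq_nnnorm, ← ofReal_norm, Complex.norm_real, Real.norm_of_nonneg hb]
    rw [ea, eb]
    calc _ ≤ ENNReal.ofReal a * 1 + ENNReal.ofReal b * 1 := by gcongr
      _ = 1 := by rw [mul_one, mul_one, ← ENNReal.ofReal_add ha hb, hab, ENNReal.ofReal_one]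
  have hnot : hh.toLp h ∉ closure B := by
    intro hmem
    obtain ⟨u, huB, hu⟩ := mem_closure_iff_seq_limit.1 hmem
    obtain ⟨φ, -, hφ⟩ := (tendstoInMeasure_of_tendsto_Lp hu).exists_seq_tendsto_ae
    have := N_closed X (fun n => u (φ n)) h (fun n => Lp.aestronglyMeasurable _) hh.1
      (fun n => huB _) hfin (by
        filter_upwards [hφ, hh.coeFn_toLp] with t ht ht2
        rwa [ht2] at ht)
    exact absurd h1 (not_lt.2 this)
  obtain ⟨L, c, hL, hc⟩ := RCLike.geometric_hahn_banach_closed_point (𝕜 := ℂ) hBc.closure isClosed_closure hnot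
  have h0 : (0 : Lp ℂ 2 μ) ∈ B := by
    change X.N _ ≤ 1
    rw [X.ae_congr _ (fun _ => 0) (Lp.coeFn_zero _ _ _), N_zero]
    exact zero_le_one
  have hcpos : 0 < c := by simpa using hL 0 (subset_closure h0)
  let g0 : Lp ℂ 2 μ := (InnerProductSpace.toDual ℂ (Lp ℂ 2 μ)).symm L
  have hg0 : ∀ u, L u = ∫ t, u t * (starRingEnd ℂ) (g0 t) ∂μ := fun u => by
    rw [← InnerProductSpace.toDual_symm_apply (𝕜 := ℂ), L2.inner_def]
    rfl
  let g : 𝕋 → ℂ := fun t => ((c⁻¹ : ℝ) : ℂ) * g0 t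
  have hgm : Measurable g := by
    have := (Lp.stronglyMeasurable g0).measurable
    fun_prop
  have hgL : MemLp g 2 μ := (Lp.memLp g0).const_mul _
  have hg : ∀ u : Lp ℂ 2 μ, ∫ t, u t * (starRingEnd ℂ) (g t) ∂μ = ((c⁻¹ : ℝ) : ℂ) * L u := fun u => by
    rw [hg0, ← integral_const_mul]
    congr 1; ext t
    simp only [g, map_mul, Complex.conj_ofReal]
    ring
  refine ⟨g, hgm, hgL, ?_, ?_⟩
  · refine iSup_le fun f => ?_
    obtain ⟨f, hfm, hf1⟩ := f
    simp only
    rw [lintegral_trunc hfm.aemeasurable hgm.aemeasurable]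
    refine iSup_le fun n => ?_
    let a : 𝕋 → ℂ := fun t => (‖trunc n (f t)‖ : ℂ) * phase (g t)
    have ham : AEStronglyMeasurable a μ := by
      have h1 : AEMeasurable (fun t => ‖trunc n (f t)‖) μ :=
        ((measurable_trunc n).comp_aemeasurable hfm.aemeasurable).norm
      exact ((Complex.measurable_ofReal.comp_aemeasurable h1).mul
        (measurable_phase.comp hgm).aemeasurable).aestronglyMeasurable
    have han : ∀ t, ‖a t‖ ≤ ‖trunc n (f t)‖ := fun t => by
      simp only [a, norm_mul, Complex.norm_real, norm_norm]
      exact mul_le_of_le_one_right (norm_nonneg _) (phase_norm_le _)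
    have haL : MemLp a 2 μ := MemLp.of_bound ham n
      (Eventually.of_forall fun t => (han t).trans (trunc_norm_le' _ _))
    have haB : haL.toLp a ∈ B := by
      change X.N _ ≤ 1
      rw [X.ae_congr _ _ haL.coeFn_toLp]
      exact (X.ideal f a ham (Eventually.of_forall fun t =>
        (han t).trans (trunc_norm_le _ _))).trans hf1
    have hlt := hL _ (subset_closure haB)
    have e1 := hg (haL.toLp a)
    have e2 : ∫ t, (haL.toLp a) t * (starRingEnd ℂ) (g t) ∂μ =
        ((∫ t, ‖trunc n (f t) * g t‖ ∂μ : ℝ) : ℂ) := by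
      rw [← integral_complex_ofReal]
      refine integral_congr_ae ?_
      filter_upwards [haL.coeFn_toLp] with t ht
      rw [ht]
      simp only [a, norm_mul, Complex.ofReal_mul]
      rw [mul_assoc, mul_comm (phase _), conj_mul_phase]
    rw [e2] at e1
    have e3 := congrArg Complex.re e1
    rw [Complex.ofReal_re, Complex.re_ofReal_mul] at e3
    have e4 : ∫ t, ‖trunc n (f t) * g t‖ ∂μ ≤ 1 := by
      rw [e3, inv_mul_le_iff₀ hcpos, mul_one]
      exact hlt.le
    have hfInt : Integrable (fun t => trunc n (f t) * g t) μ := by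
      refine (hgL.integrable (by norm_num)).bdd_mul
        ((measurable_trunc n).comp_aemeasurable hfm.aemeasurable).aestronglyMeasurable
        (c := n) (Eventually.of_forall fun t => trunc_norm_le' _ _)
    have e5 := ofReal_integral_norm_eq_lintegral_enorm hfInt
    change ∫⁻ t, ‖trunc n (f t) * g t‖ₑ ∂μ ≤ 1
    rw [← e5]
    simpa using ENNReal.ofReal_le_ofReal e4
  · have e1 := hg (hh.toLp h)
    have e2 : (1 : ℝ) < ‖∫ t, (hh.toLp h) t * (starRingEnd ℂ) (g t) ∂μ‖ := by
      rw [e1]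
      refine lt_of_lt_of_le ?_ (Complex.re_le_norm _)
      rw [Complex.re_ofReal_mul, inv_mul_eq_div, lt_div_iff₀ hcpos, one_mul]
      exact hc
    rw [integral_congr_ae (g := fun t => h t * (starRingEnd ℂ) (g t)) (by
      filter_upwards [hh.coeFn_toLp] with t ht; rw [ht])] at e2
    have e3 : (1 : ℝ≥0∞) < ‖∫ t, h t * (starRingEnd ℂ) (g t) ∂μ‖ₑ := by
      rw [← ofReal_norm, ← ENNReal.ofReal_one]
      exact (ENNReal.ofReal_lt_ofReal_iff_of_nonneg zero_le_one).2 e2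
    refine e3.trans_le ((enorm_integral_le_lintegral_enorm _).trans (le_of_eq ?_))
    refine lintegral_congr fun t => ?_
    simp [enorm_eq_nnnorm]

/-- The constant one has finite dual norm, that is, `X ⊆ L¹`. -/
lemma kdual_one (X : BFS) (hri : RearrInvN X.N) : kdualN X.N (fun _ => 1) < ⊤ := by
  obtain ⟨c, hc⟩ : ∃ c : ℕ, 1 < (c : ℝ≥0∞) * X.N (fun _ => 1) := by
    have h0 := N_one_pos X
    obtain ⟨c, hc⟩ := ENNReal.exists_nat_gt (r := (X.N (fun _ => 1))⁻¹) (by simpa using h0)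
    refine ⟨c, ?_⟩
    rw [← ENNReal.inv_mul_cancel h0 X.const_finite.ne]
    exact (ENNReal.mul_lt_mul_iff_left h0 X.const_finite.ne).2 hc
  have hN : X.N (fun _ => (c : ℂ) * 1) = (c : ℝ≥0∞) * X.N (fun _ => 1) := by
    rw [X.smul_eq]
    congr 1
    simp
  obtain ⟨g, hgm, -, hg1, hg2⟩ := hb X (h := fun _ => (c : ℂ) * 1) (memLp_const _)
    (by rw [hN]; exact ENNReal.mul_lt_top (by simp) X.const_finite) (by rwa [hN])
  set I := ∫⁻ t, (‖g t‖₊ : ℝ≥0∞) ∂μ with hI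
  have hI0 : I ≠ 0 := by
    intro h
    have : ∫⁻ t, (‖(c : ℂ) * 1 * g t‖₊ : ℝ≥0∞) ∂μ = c * I := by
      rw [hI, ← lintegral_const_mul' _ _ (by simp)]
      simp
    rw [this, h] at hg2
    simp at hg2
  refine lt_of_le_of_lt (b := I⁻¹) (iSup_le fun f => ?_) (by simpa [pos_iff_ne_zero] using hI0)
  obtain ⟨f, hf⟩ := f
  simp only [mul_one]
  have key : (∫⁻ t, (‖f t‖₊ : ℝ≥0∞) ∂μ) * I ≤ 1 := by
    calc (∫⁻ t, (‖f t‖₊ : ℝ≥0∞) ∂μ) * I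
        = ∫⁻ t, (‖f t‖₊ : ℝ≥0∞) * I ∂μ := (lintegral_mul_const'' _ hf.1.enorm).symm
      _ = ∫⁻ t, ∫⁻ y, (‖f t * g (t - y)‖₊ : ℝ≥0∞) ∂μ ∂μ := by
          refine lintegral_congr fun t => ?_
          simp only [nnnorm_mul, ENNReal.coe_mul]
          rw [lintegral_const_mul' _ _ (by simp), hI,
            lintegral_sub_left_eq_self (fun y => (‖g y‖₊ : ℝ≥0∞)) t]
      _ = ∫⁻ y, ∫⁻ t, (‖f t * g (t - y)‖₊ : ℝ≥0∞) ∂μ ∂μ := by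
          refine lintegral_lintegral_swap ?_
          refine AEMeasurable.enorm (f := fun p : 𝕋 × 𝕋 => f p.1 * g (p.1 - p.2)) ?_
          exact hf.1.aemeasurable.comp_fst.mul (hgm.comp (measurable_fst.sub measurable_snd)).aemeasurable
      _ ≤ ∫⁻ y, 1 ∂μ := lintegral_mono fun y => (kdual_translate X hri hf y).trans hg1
      _ = 1 := by simp
  rw [← one_div]
  exact (ENNReal.le_div_iff_mul_le (Or.inl hI0) (Or.inr (by simp))).2 key

lemma memN_integrable (X : BFS) (hri : RearrInvN X.N) {f : 𝕋 → ℂ} (hf : MemN X.N f) :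
    Integrable f μ := by
  refine ⟨hf.1, ?_⟩
  have := holder X (g := fun _ => 1) hf
  simp only [mul_one] at this
  exact this.trans_lt (ENNReal.mul_lt_top hf.2 (kdual_one X hri))

lemma exists_bdd (X : BFS) (f : 𝕋 → ℂ) (hfm : Measurable f) (hfin : X.N f < ⊤)
    (h1 : 1 < X.N f) :
    ∃ (g : 𝕋 → ℂ) (M : ℕ), Measurable g ∧ (∀ t, ‖g t‖ ≤ M) ∧ kdualN X.N g ≤ 1 ∧
      1 < ‖∫ t, f t * (starRingEnd ℂ) (g t) ∂μ‖ := by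
  have hfn : ∀ n, Measurable fun t => trunc n (f t) := fun n => (measurable_trunc n).comp hfm
  have hsup := X.semiFatou (fun n t => trunc n (f t)) f (fun n => (hfn n).aestronglyMeasurable)
    hfm.aestronglyMeasurable (Eventually.of_forall fun t => ⟨trunc_mono _, trunc_tendsto _⟩) hfin
  rw [hsup] at h1
  obtain ⟨n, hn⟩ := lt_iSup_iff.1 h1
  obtain ⟨g, hgm, hgL, hg1, hg2⟩ := hb X (h := fun t => trunc n (f t))
    (MemLp.of_bound (hfn n).aestronglyMeasurable n (Eventually.of_forall fun t => trunc_norm_le' _ _))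
    (N_bdd X (hfn n).aestronglyMeasurable n fun t => trunc_norm_le' _ _) hn
  have e1 : ∫⁻ t, (‖trunc n (f t) * g t‖₊ : ℝ≥0∞) ∂μ = ∫⁻ t, (‖g t * trunc n (f t)‖₊ : ℝ≥0∞) ∂μ := by
    simp only [mul_comm]
  rw [e1, lintegral_trunc hgm.aemeasurable (hfn n).aemeasurable] at hg2
  obtain ⟨m, hm⟩ := lt_iSup_iff.1 hg2
  have htm : Measurable fun t => trunc m (g t) := (measurable_trunc m).comp hgm
  have hle : ∀ t, ‖phase (trunc n (f t)) * (‖trunc m (g t)‖ : ℂ)‖ ≤ ‖trunc m (g t)‖ := fun t => by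
    rw [norm_mul, Complex.norm_real, norm_norm]
    exact mul_le_of_le_one_left (norm_nonneg _) (phase_norm_le _)
  refine ⟨fun t => phase (trunc n (f t)) * (‖trunc m (g t)‖ : ℂ), m, ?_, ?_, ?_, ?_⟩
  · exact (measurable_phase.comp (hfn n)).mul (Complex.measurable_ofReal.comp htm.norm)
  · exact fun t => (hle t).trans (trunc_norm_le' _ _)
  · exact (kdual_mono _ fun t => (hle t).trans (trunc_norm_le _ _)).trans hg1
  · have e2 : ∀ t, f t * (starRingEnd ℂ) (phase (trunc n (f t)) * (‖trunc m (g t)‖ : ℂ)) =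
        ((‖trunc m (g t) * trunc n (f t)‖ : ℝ) : ℂ) := fun t => by
      rw [map_mul, Complex.conj_ofReal, ← mul_assoc, norm_mul, Complex.ofReal_mul,
        mul_comm (‖trunc m (g t)‖ : ℂ)]
      congr 1
      by_cases h : ‖f t‖ ≤ n
      · rw [show trunc n (f t) = f t by simp [trunc, h], mul_conj_phase]
      · simp [trunc, h, phase]
    simp only [e2]
    rw [integral_complex_ofReal, Complex.norm_real]
    refine lt_of_lt_of_le ?_ (le_abs_self _)
    have hfInt : Integrable (fun t => trunc m (g t) * trunc n (f t)) μ :=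
      Integrable.of_bound (htm.mul (hfn n)).aestronglyMeasurable (m * n : ℝ)
        (Eventually.of_forall fun t => by
          rw [norm_mul]
          gcongr
          · exact trunc_norm_le' _ _
          · exact trunc_norm_le' _ _)
    have e5 := ofReal_integral_norm_eq_lintegral_enorm hfInt
    change 1 < ∫⁻ t, ‖trunc m (g t) * trunc n (f t)‖ₑ ∂μ at hm
    rw [← e5, ← ENNReal.ofReal_one] at hm
    exact (ENNReal.ofReal_lt_ofReal_iff_of_nonneg zero_le_one).1 hm

lemma translate_cont {f : 𝕋 → ℂ} (hf : Integrable f μ) :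
    Tendsto (fun y : 𝕋 => ∫ t, ‖f (t + y) - f t‖ ∂μ) (𝓝 0) (𝓝 0) := by
  have hL : MemLp f 1 μ := memLp_one_iff_integrable.2 hf
  have : Fact ((1 : ℝ≥0∞) ≠ ⊤) := ⟨by simp⟩
  have hcont : Continuous fun y : 𝕋 => (DomAddAct.mk y) +ᵥ (hL.toLp f) := by
    exact (continuous_vadd (M := 𝕋ᵈᵃᵃ) (X := Lp ℂ 1 μ)).comp
      ((DomAddAct.continuous_mk).prodMk continuous_const)
  have h0 := (hcont.tendsto 0).dist (tendsto_const_nhds (x := hL.toLp f))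
  simp only [DomAddAct.mk_vadd_toLp] at h0
  have e : ∀ y : 𝕋, dist ((hL.comp_measurePreserving (measurePreserving_vadd y μ)).toLp (f <| y +ᵥ ·)) (hL.toLp f)
      = ∫ t, ‖f (t + y) - f t‖ ∂μ := fun y => by
    rw [dist_eq_norm, ← MemLp.toLp_sub, L1.norm_eq_integral_norm]
    refine integral_congr_ae ?_
    filter_upwards [((hL.comp_measurePreserving (measurePreserving_vadd y μ)).sub hL).coeFn_toLp] with t ht
    refine (congrArg norm ht).trans ?_
    simp [add_comm y t]
  have h2 := h0.congr e
  convert h2 using 2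
  symm
  rw [dist_eq_zero]
  refine MemLp.toLp_congr _ _ (Eventually.of_forall fun t => ?_)
  simp

lemma isTrigPoly_approx (G : C(𝕋, ℂ)) {η : ℝ} (hη : 0 < η) :
    ∃ q : 𝕋 → ℂ, IsTrigPoly q ∧ Continuous q ∧ ∀ t, ‖q t - G t‖ ≤ η := by
  have hG : G ∈ (Submodule.span ℂ (Set.range (@fourier (2 * Real.pi)))).topologicalClosure := by
    rw [span_fourier_closure_eq_top]; trivial
  obtain ⟨q, hq, hd⟩ := Metric.mem_closure_iff.1 hG η hη
  refine ⟨q, ?_, q.continuous, fun t => ?_⟩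
  · obtain ⟨c, rfl⟩ := Finsupp.mem_span_range_iff_exists_finsupp.1 hq
    refine ⟨c.support.sup Int.natAbs, c, ?_⟩
    ext x
    rw [Finsupp.sum, ContinuousMap.sum_apply]
    simp only [ContinuousMap.smul_apply, smul_eq_mul]
    refine Finset.sum_subset (fun k hk => ?_) (fun k _ hk => ?_)
    · have : k.natAbs ≤ c.support.sup Int.natAbs := Finset.le_sup (f := Int.natAbs) hk
      rw [Finset.mem_Icc]
      omega
    · rw [Finsupp.notMem_support_iff.1 hk, zero_mul]
  · have := (ContinuousMap.dist_apply_le_dist (f := q) (g := G) t)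
    rw [dist_comm q G, dist_eq_norm] at this
    exact this.trans hd.le

lemma isTrigPoly_smul {q : 𝕋 → ℂ} (hq : IsTrigPoly q) (c : ℂ) : IsTrigPoly fun t => c * q t := by
  obtain ⟨n, a, rfl⟩ := hq
  refine ⟨n, fun k => c * a k, ?_⟩
  ext x
  simp only [Finset.mul_sum, mul_assoc]


lemma exists_bump {U : Set 𝕋} (hU : U ∈ 𝓝 (0 : 𝕋)) :
    ∃ φ : 𝕋 → ℝ, Continuous φ ∧ (∀ y, 0 ≤ φ y) ∧ (∀ y, y ∉ U → φ y = 0) ∧ ∫ y, φ y ∂μ = 1 := by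
  obtain ⟨δ, hδ, hδU⟩ := Metric.mem_nhds_iff.1 hU
  obtain ⟨ψ, hψ⟩ : ∃ ψ : 𝕋 → ℝ, ψ = fun y => max 0 (δ - dist y 0) := ⟨_, rfl⟩
  have hc : Continuous ψ := by rw [hψ]; fun_prop
  have h0 : ∀ y, 0 ≤ ψ y := fun y => by rw [hψ]; exact le_max_left _ _
  have hz : ∀ y, y ∉ U → ψ y = 0 := fun y hy => by
    have : ¬ dist y 0 < δ := fun h => hy (hδU h)
    rw [hψ]
    exact max_eq_left (by linarith)
  have hi : Integrable ψ μ := hc.integrable_of_hasCompactSupport (HasCompactSupport.of_compactSpace _)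
  have hpos : 0 < ∫ y, ψ y ∂μ := by
    refine hc.integral_pos_of_hasCompactSupport_nonneg_nonzero
      (HasCompactSupport.of_compactSpace _) h0 (x := 0) ?_
    rw [hψ]
    simp [hδ]
  refine ⟨fun y => (∫ y, ψ y ∂μ)⁻¹ * ψ y, by fun_prop, fun y => by have := h0 y; positivity,
    fun y hy => by simp [hz y hy], ?_⟩
  rw [integral_const_mul, inv_mul_cancel₀ hpos.ne']

lemma exists_cont (X : BFS) (hri : RearrInvN X.N) (f g : 𝕋 → ℂ) (hf : Integrable f μ)
    (M : ℕ) (hg : Measurable g) (hM : ∀ t, ‖g t‖ ≤ M) (hg1 : kdualN X.N g ≤ 1)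
    (h1 : 1 < ‖∫ t, f t * (starRingEnd ℂ) (g t) ∂μ‖) :
    ∃ G : C(𝕋, ℂ), kdualN X.N G ≤ 1 ∧ 1 < ‖∫ t, f t * (starRingEnd ℂ) (G t) ∂μ‖ := by
  obtain ⟨F, hF⟩ : ∃ F : 𝕋 → ℂ, F = fun y => ∫ t, f t * (starRingEnd ℂ) (g (t - y)) ∂μ := ⟨_, rfl⟩
  have hF0 : F 0 = ∫ t, f t * (starRingEnd ℂ) (g t) ∂μ := by simp [hF]
  have hcg : Measurable fun t => (starRingEnd ℂ) (g t) := Complex.continuous_conj.measurable.comp hg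
  have hFd : ∀ y, ‖F y - F 0‖ ≤ M * ∫ t, ‖f (t + y) - f t‖ ∂μ := fun y => by
    have hfy : Integrable (fun t => f (t + y)) μ := hf.comp_add_right y
    have e : F y = ∫ t, f (t + y) * (starRingEnd ℂ) (g t) ∂μ := by
      rw [hF]
      simp only
      rw [← integral_add_right_eq_self _ y]
      simp
    have hb1 : ∀ᵐ t ∂μ, ‖(starRingEnd ℂ) (g t)‖ ≤ M :=
      Eventually.of_forall fun t => by simpa using hM t
    rw [e, hF0, ← integral_sub (hfy.mul_bdd hcg.aestronglyMeasurable hb1)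
      (hf.mul_bdd hcg.aestronglyMeasurable hb1), ← integral_const_mul]
    refine norm_integral_le_of_norm_le ((hfy.sub hf).norm.const_mul _)
      (Eventually.of_forall fun t => ?_)
    rw [← sub_mul, norm_mul, mul_comm]
    gcongr
    simpa using hM t
  obtain ⟨ε, hε, hε1⟩ : ∃ ε > 0, 1 + ε < ‖F 0‖ := by
    rw [← hF0] at h1
    exact ⟨(‖F 0‖ - 1) / 2, by linarith, by linarith⟩
  have hU : {y : 𝕋 | ‖F y - F 0‖ < ε} ∈ 𝓝 (0 : 𝕋) := by
    have ht := (translate_cont hf).const_mul (M : ℝ)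
    rw [mul_zero] at ht
    filter_upwards [ht.eventually (gt_mem_nhds hε)] with y hy
    exact (hFd y).trans_lt hy
  obtain ⟨φ, hφc, hφ0, hφU, hφ1⟩ := exists_bump hU
  have hφi : Integrable φ μ :=
    hφc.integrable_of_hasCompactSupport (HasCompactSupport.of_compactSpace _)
  obtain ⟨C, hC⟩ : ∃ C, ∀ y, ‖φ y‖ ≤ C := by
    obtain ⟨C, hC⟩ := isCompact_univ.exists_bound_of_continuousOn hφc.continuousOn
    exact ⟨C, fun y => hC y (Set.mem_univ _)⟩
  obtain ⟨G, hG⟩ : ∃ G : 𝕋 → ℂ, G = fun x => ∫ y, (φ y : ℂ) * g (x - y) ∂μ := ⟨_, rfl⟩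
  have hG2 : G = fun x => ∫ y, (φ (x - y) : ℂ) * g y ∂μ := by
    rw [hG]
    ext x
    rw [← integral_sub_left_eq_self _ μ x]
    simp
  have hGc : Continuous G := by
    rw [hG2]
    refine continuous_of_dominated (bound := fun _ => C * M) (fun x => ?_) (fun x => ?_)
      (integrable_const _) ?_
    · exact ((Complex.continuous_ofReal.comp (hφc.comp (continuous_const.sub continuous_id))).measurable.mul hg).aestronglyMeasurable
    · refine Eventually.of_forall fun y => ?_
      rw [norm_mul, Complex.norm_real]
      exact mul_le_mul (hC _) (hM _) (norm_nonneg _) ((norm_nonneg _).trans (hC 0))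
    · refine Eventually.of_forall fun y => ?_
      exact (Complex.continuous_ofReal.comp (hφc.comp (continuous_id.sub continuous_const))).mul continuous_const
  have hgs : Measurable fun p : 𝕋 × 𝕋 => g (p.1 - p.2) := hg.comp (measurable_fst.sub measurable_snd)
  have hφm : Measurable fun p : 𝕋 × 𝕋 => (φ p.2 : ℂ) :=
    Complex.measurable_ofReal.comp (hφc.measurable.comp measurable_snd)
  refine ⟨⟨G, hGc⟩, ?_, ?_⟩
  · refine iSup_le fun h => ?_
    obtain ⟨h, hh⟩ := h
    simp only [ContinuousMap.coe_mk]
    calc ∫⁻ x, (‖h x * G x‖₊ : ℝ≥0∞) ∂μ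
        ≤ ∫⁻ x, ∫⁻ y, (‖φ y‖₊ : ℝ≥0∞) * (‖h x * g (x - y)‖₊ : ℝ≥0∞) ∂μ ∂μ := by
          refine lintegral_mono fun x => ?_
          change ‖h x * G x‖ₑ ≤ _
          rw [hG]
          simp only
          rw [← integral_const_mul]
          refine (enorm_integral_le_lintegral_enorm _).trans (le_of_eq (lintegral_congr fun y => ?_))
          rw [enorm_mul, enorm_mul, nnnorm_mul, ENNReal.coe_mul]
          have : ‖(φ y : ℂ)‖ₑ = (‖φ y‖₊ : ℝ≥0∞) := by
            rw [enorm_eq_nnnorm, Complex.nnnorm_real]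
          rw [this, enorm_eq_nnnorm, enorm_eq_nnnorm]
          ring
      _ = ∫⁻ y, ∫⁻ x, (‖φ y‖₊ : ℝ≥0∞) * (‖h x * g (x - y)‖₊ : ℝ≥0∞) ∂μ ∂μ := by
          refine lintegral_lintegral_swap ?_
          have m1 : AEMeasurable (fun p : 𝕋 × 𝕋 => (‖φ p.2‖₊ : ℝ≥0∞)) (μ.prod μ) :=
            (hφc.measurable.comp measurable_snd).enorm.aemeasurable
          have m2 : AEMeasurable (fun p : 𝕋 × 𝕋 => (‖h p.1 * g (p.1 - p.2)‖₊ : ℝ≥0∞)) (μ.prod μ) :=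
            (hh.1.aemeasurable.comp_fst.mul hgs.aemeasurable).enorm
          exact m1.mul m2
      _ ≤ ∫⁻ y, (‖φ y‖₊ : ℝ≥0∞) * 1 ∂μ := by
          refine lintegral_mono fun y => ?_
          rw [lintegral_const_mul' _ _ (by simp)]
          gcongr
          exact (kdual_translate X hri hh y).trans hg1
      _ = 1 := by
          simp only [mul_one]
          have := ofReal_integral_norm_eq_lintegral_enorm hφi
          simp only [Real.norm_of_nonneg (hφ0 _), hφ1, ENNReal.ofReal_one] at this
          exact this.symm
  · simp only [ContinuousMap.coe_mk]
    have hprod : Integrable (fun p : 𝕋 × 𝕋 => f p.1 * ((φ p.2 : ℂ) * (starRingEnd ℂ) (g (p.1 - p.2))))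
        (μ.prod μ) := by
      refine (hf.comp_fst μ).mul_bdd (c := C * M) ?_ ?_
      · exact (hφm.mul (Complex.continuous_conj.measurable.comp hgs)).aestronglyMeasurable
      · refine Eventually.of_forall fun p => ?_
        rw [norm_mul, Complex.norm_real, RCLike.norm_conj]
        exact mul_le_mul (hC _) (hM _) (norm_nonneg _) ((norm_nonneg _).trans (hC 0))
    have e1 : ∫ x, f x * (starRingEnd ℂ) (G x) ∂μ = ∫ y, (φ y : ℂ) * F y ∂μ := by
      calc ∫ x, f x * (starRingEnd ℂ) (G x) ∂μ
          = ∫ x, ∫ y, f x * ((φ y : ℂ) * (starRingEnd ℂ) (g (x - y))) ∂μ ∂μ := by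
            refine integral_congr_ae (Eventually.of_forall fun x => ?_)
            simp only [hG]
            rw [integral_const_mul, ← integral_conj]
            simp
        _ = ∫ y, ∫ x, f x * ((φ y : ℂ) * (starRingEnd ℂ) (g (x - y))) ∂μ ∂μ :=
            integral_integral_swap hprod
        _ = _ := by
            refine integral_congr_ae (Eventually.of_forall fun y => ?_)
            simp only [hF]
            rw [← integral_const_mul]
            refine integral_congr_ae (Eventually.of_forall fun x => ?_)
            simp only
            ring
    have hφF : Integrable (fun y => (φ y : ℂ) * F y) μ := by
      refine hprod.integral_prod_right.congr (Eventually.of_forall fun y => ?_)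
      simp only [hF]
      rw [← integral_const_mul]
      refine integral_congr_ae (Eventually.of_forall fun x => ?_)
      simp only
      ring
    have e2 : F 0 = ∫ y, (φ y : ℂ) * F 0 ∂μ := by
      rw [integral_mul_const, integral_complex_ofReal, hφ1]
      simp
    have e3 : ‖(∫ y, (φ y : ℂ) * F y ∂μ) - F 0‖ ≤ ε := by
      have hi0 : Integrable (fun y => (φ y : ℂ) * F 0) μ := hφi.ofReal.mul_const _
      rw [e2, ← integral_sub hφF hi0]
      have : ε = ∫ y, φ y * ε ∂μ := by rw [integral_mul_const, hφ1, one_mul]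
      rw [this]
      refine norm_integral_le_of_norm_le (hφi.mul_const _) (Eventually.of_forall fun y => ?_)
      rw [← mul_sub, norm_mul, Complex.norm_real, Real.norm_of_nonneg (hφ0 y)]
      by_cases hy : ‖F y - F 0‖ < ε
      · exact mul_le_mul_of_nonneg_left hy.le (hφ0 y)
      · rw [hφU y hy]; simp
    rw [e1]
    have e4 := norm_sub_norm_le (F 0) (∫ y, (φ y : ℂ) * F y ∂μ)
    rw [norm_sub_rev] at e4
    linarith

lemma exists_poly (X : BFS) (hri : RearrInvN X.N) (f : 𝕋 → ℂ) (hf : Integrable f μ)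
    (G : C(𝕋, ℂ)) (hG1 : kdualN X.N G ≤ 1) (h1 : 1 < ‖∫ t, f t * (starRingEnd ℂ) (G t) ∂μ‖) :
    ∃ p, IsTrigPoly p ∧ kdualN X.N p ≤ 1 ∧ 1 < ‖∫ t, f t * (starRingEnd ℂ) (p t) ∂μ‖ := by
  have hA := kdual_one X hri
  set A := (kdualN X.N (fun _ => 1)).toReal with hAdef
  have hA0 : 0 ≤ A := ENNReal.toReal_nonneg
  set J := ∫ t, ‖f t‖ ∂μ with hJ
  have hJ0 : 0 ≤ J := integral_nonneg fun t => norm_nonneg _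
  set I := ‖∫ t, f t * (starRingEnd ℂ) (G t) ∂μ‖ with hI
  obtain ⟨η, hη, hη1⟩ : ∃ η > 0, 1 + η * A < I - η * J := by
    refine ⟨(I - 1) / (2 * (A + J + 1)), by have : 0 < I - 1 := by linarith
                                            positivity, ?_⟩
    have h2 : (I - 1) / (2 * (A + J + 1)) * (2 * (A + J + 1)) = I - 1 := by field_simp
    have h3 : 0 < (I - 1) / (2 * (A + J + 1)) := by
      have : 0 < I - 1 := by linarith
      positivity
    nlinarith
  obtain ⟨q, hq, hqc, hqG⟩ := isTrigPoly_approx G hη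
  have hs : 0 < 1 + η * A := by positivity
  refine ⟨fun t => (((1 + η * A)⁻¹ : ℝ) : ℂ) * q t, isTrigPoly_smul hq _, ?_, ?_⟩
  · refine iSup_le fun h => ?_
    obtain ⟨h, hh⟩ := h
    have b1 : ∫⁻ t, (‖h t * G t‖₊ : ℝ≥0∞) ∂μ ≤ 1 :=
      (le_iSup (fun f : unitBall X.N => ∫⁻ t, (‖f.1 t * G t‖₊ : ℝ≥0∞) ∂μ) ⟨h, hh⟩).trans hG1
    have b2 : ∫⁻ t, (‖h t‖₊ : ℝ≥0∞) ∂μ ≤ ENNReal.ofReal A := by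
      have := (le_iSup (fun f : unitBall X.N => ∫⁻ t, (‖f.1 t * 1‖₊ : ℝ≥0∞) ∂μ) ⟨h, hh⟩)
      simp only [mul_one] at this
      rw [hAdef, ENNReal.ofReal_toReal hA.ne]
      refine this.trans (le_of_eq ?_)
      simp [kdualN]
    have hcst : (‖(((1 + η * A)⁻¹ : ℝ) : ℂ)‖₊ : ℝ≥0∞) = (ENNReal.ofReal (1 + η * A))⁻¹ := by
      rw [← enorm_eq_nnnorm, ← ofReal_norm, Complex.norm_real, Real.norm_of_nonneg (by positivity),
          ENNReal.ofReal_inv_of_pos hs]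
    calc ∫⁻ t, (‖h t * ((((1 + η * A)⁻¹ : ℝ) : ℂ) * q t)‖₊ : ℝ≥0∞) ∂μ
        ≤ ∫⁻ t, (ENNReal.ofReal (1 + η * A))⁻¹ * ((‖h t * G t‖₊ : ℝ≥0∞) + ENNReal.ofReal η * (‖h t‖₊ : ℝ≥0∞)) ∂μ := by
          refine lintegral_mono fun t => ?_
          have hqt : (‖q t‖₊ : ℝ≥0∞) ≤ (‖G t‖₊ : ℝ≥0∞) + ENNReal.ofReal η := by
            rw [← enorm_eq_nnnorm, ← enorm_eq_nnnorm, ← ofReal_norm, ← ofReal_norm,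
              ← ENNReal.ofReal_add (norm_nonneg _) hη.le]
            refine ENNReal.ofReal_le_ofReal ?_
            have := norm_sub_norm_le (q t) (G t)
            linarith [hqG t]
          simp only [nnnorm_mul, ENNReal.coe_mul]
          rw [hcst]
          calc _ = (ENNReal.ofReal (1 + η * A))⁻¹ * ((‖h t‖₊ : ℝ≥0∞) * (‖q t‖₊ : ℝ≥0∞)) := by ring
            _ ≤ (ENNReal.ofReal (1 + η * A))⁻¹ * ((‖h t‖₊ : ℝ≥0∞) * ((‖G t‖₊ : ℝ≥0∞) + ENNReal.ofReal η)) := by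
              gcongr
            _ = _ := by ring
      _ = (ENNReal.ofReal (1 + η * A))⁻¹ * ((∫⁻ t, (‖h t * G t‖₊ : ℝ≥0∞) ∂μ) + ENNReal.ofReal η * ∫⁻ t, (‖h t‖₊ : ℝ≥0∞) ∂μ) := by
          rw [lintegral_const_mul' _ _ (by simpa using hs), lintegral_add_left',
            lintegral_const_mul' _ _ (by simp)]
          exact (hh.1.aemeasurable.mul G.continuous.measurable.aemeasurable).enorm
      _ ≤ (ENNReal.ofReal (1 + η * A))⁻¹ * (1 + ENNReal.ofReal η * ENNReal.ofReal A) := by gcongr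
      _ = 1 := by
          rw [← ENNReal.ofReal_mul hη.le, ← ENNReal.ofReal_one, ← ENNReal.ofReal_add zero_le_one (by positivity)]
          rw [ENNReal.ofReal_one]
          exact ENNReal.inv_mul_cancel (by simpa using hs) (by simp)
  · have hfInt : ∀ u : 𝕋 → ℂ, Continuous u → Integrable (fun t => f t * (starRingEnd ℂ) (u t)) μ := by
      intro u hu
      obtain ⟨C, hC⟩ := isCompact_univ.exists_bound_of_continuousOn hu.continuousOn
      exact hf.mul_bdd (c := C) (Complex.continuous_conj.comp hu).measurable.aestronglyMeasurable
        (Eventually.of_forall fun t => by simpa using hC t (Set.mem_univ _))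
    have e1 : ‖(∫ t, f t * (starRingEnd ℂ) (q t) ∂μ) - ∫ t, f t * (starRingEnd ℂ) (G t) ∂μ‖ ≤ η * J := by
      rw [← integral_sub (hfInt q hqc) (hfInt G G.continuous), hJ, ← integral_const_mul]
      refine norm_integral_le_of_norm_le (hf.norm.const_mul _) (Eventually.of_forall fun t => ?_)
      rw [← mul_sub, ← map_sub, norm_mul, RCLike.norm_conj, mul_comm]
      gcongr
      exact hqG t
    have e2 : ∫ t, f t * (starRingEnd ℂ) ((((1 + η * A)⁻¹ : ℝ) : ℂ) * q t) ∂μ =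
        (((1 + η * A)⁻¹ : ℝ) : ℂ) * ∫ t, f t * (starRingEnd ℂ) (q t) ∂μ := by
      rw [← integral_const_mul]
      congr 1; ext t
      rw [map_mul, Complex.conj_ofReal]
      ring
    rw [e2, norm_mul, Complex.norm_real, Real.norm_of_nonneg (by positivity), inv_mul_eq_div,
      lt_div_iff₀ hs, one_mul]
    have e4 := norm_sub_norm_le (∫ t, f t * (starRingEnd ℂ) (G t) ∂μ) (∫ t, f t * (starRingEnd ℂ) (q t) ∂μ)
    rw [norm_sub_rev] at e4
    linarith

/-- In a rearrangement-invariant Banach function space `X` over `𝕋`, the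
norm is attained by dualizing against trigonometric polynomials in the unit ball of the
Köthe dual `X'`. -/
theorem norm_via_poly_duality (X : BFS) (hri : RearrInvN X.N) (f : 𝕋 → ℂ)
    (hf : MemN X.N f) :
    X.N f = ⨆ p : {p : 𝕋 → ℂ // IsTrigPoly p ∧ kdualN X.N p ≤ 1},
      (‖∫ t, f t * (starRingEnd ℂ) (p.1 t) ∂μ‖₊ : ℝ≥0∞) := by
  apply le_antisymm
  · by_contra hcon
    rw [not_le] at hcon
    obtain ⟨c, hc1, hc2⟩ := ENNReal.lt_iff_exists_nnreal_btwn.1 hcon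
    have hc0 : c ≠ 0 := by
      rintro rfl
      simp at hc1
    obtain ⟨f₁, hf₁m, hff₁⟩ : ∃ f₁ : 𝕋 → ℂ, Measurable f₁ ∧ f =ᵐ[μ] f₁ :=
      ⟨hf.1.mk f, hf.1.stronglyMeasurable_mk.measurable, hf.1.ae_eq_mk⟩
    have hN1 : X.N f₁ = X.N f := (X.ae_congr _ _ hff₁).symm
    obtain ⟨f₂, hf₂⟩ : ∃ f₂ : 𝕋 → ℂ, f₂ = fun t => (((c : ℝ)⁻¹ : ℝ) : ℂ) * f₁ t := ⟨_, rfl⟩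
    have hc0' : (c : ℝ≥0∞) ≠ 0 := by simpa using hc0
    have hN2 : X.N f₂ = (c : ℝ≥0∞)⁻¹ * X.N f := by
      rw [hf₂, X.smul_eq, hN1]
      congr 1
      rw [← ENNReal.coe_inv hc0]
      congr 1
      ext
      simp
    have hf₂m : Measurable f₂ := by rw [hf₂]; exact hf₁m.const_mul _
    have hfin : X.N f₂ < ⊤ := by
      rw [hN2]
      exact ENNReal.mul_lt_top (by simpa [pos_iff_ne_zero] using hc0) hf.2
    have hlt : 1 < X.N f₂ := by
      rw [hN2, ← ENNReal.inv_mul_cancel hc0' ENNReal.coe_ne_top]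
      exact (ENNReal.mul_lt_mul_iff_right (by simp) (by simpa using hc0)).2 hc2
    have hfInt := memN_integrable X hri ⟨hf₂m.aestronglyMeasurable, hfin⟩
    obtain ⟨g, M, hgm, hgM, hg1, hg2⟩ := exists_bdd X f₂ hf₂m hfin hlt
    obtain ⟨G, hG1, hG2⟩ := exists_cont X hri f₂ g hfInt M hgm hgM hg1 hg2
    obtain ⟨p, hp, hp1, hp2⟩ := exists_poly X hri f₂ hfInt G hG1 hG2
    have e : ∫ t, f₂ t * (starRingEnd ℂ) (p t) ∂μ =
        (((c : ℝ)⁻¹ : ℝ) : ℂ) * ∫ t, f t * (starRingEnd ℂ) (p t) ∂μ := by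
      rw [← integral_const_mul]
      refine integral_congr_ae ?_
      filter_upwards [hff₁] with t ht
      rw [hf₂, ht, mul_assoc]
    have hcpos : (0 : ℝ) < c := by
      have := pos_iff_ne_zero.2 hc0
      exact_mod_cast this
    rw [e, norm_mul, Complex.norm_real, Real.norm_of_nonneg (by positivity), inv_mul_eq_div,
      lt_div_iff₀ hcpos, one_mul] at hp2
    have hle := (le_iSup (fun p : {p : 𝕋 → ℂ // IsTrigPoly p ∧ kdualN X.N p ≤ 1} =>
      (‖∫ t, f t * (starRingEnd ℂ) (p.1 t) ∂μ‖₊ : ℝ≥0∞)) ⟨p, hp, hp1⟩).trans_lt hc1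
    rw [ENNReal.coe_lt_coe] at hle
    exact absurd hp2 (not_lt.2 (by exact_mod_cast hle.le))
  · refine iSup_le fun p => ?_
    obtain ⟨p, hp, hp1⟩ := p
    change ‖∫ t, f t * (starRingEnd ℂ) (p t) ∂μ‖ₑ ≤ _
    calc ‖∫ t, f t * (starRingEnd ℂ) (p t) ∂μ‖ₑ
        ≤ ∫⁻ t, ‖f t * (starRingEnd ℂ) (p t)‖ₑ ∂μ := enorm_integral_le_lintegral_enorm _
      _ = ∫⁻ t, (‖f t * p t‖₊ : ℝ≥0∞) ∂μ := by
          refine lintegral_congr fun t => ?_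
          simp [enorm_eq_nnnorm]
      _ ≤ X.N f * kdualN X.N p := holder X hf
      _ ≤ X.N f * 1 := by gcongr
      _ = X.N f := mul_one _
end
end

section
/- Let X, Y be rearrangement-invariant Banach function spaces over 𝕋, with X separable. If A : X → Y is a bounded linear operator and there exists a sequence (a_n)_{n∈ℤ} of complex numbers such that ⟨Aχ_j, χ_k⟩ = a_{k−j} for all j, k ∈ ℤ (where χ_n(t) = t^n), then there exists a ∈ M(X,Y) with â(n) = a_n for all n, and A is the multiplication operator Af = af. -/
open MeasureTheory Filter Topology ComplexConjugate
open scoped ENNReal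

noncomputable section

instance prob_mu : IsProbabilityMeasure μ :=
  inferInstanceAs (IsProbabilityMeasure (AddCircle.haarAddCircle (T := 2 * Real.pi)))

instance inv_mu : μ.IsAddLeftInvariant :=
  inferInstanceAs ((AddCircle.haarAddCircle (T := 2 * Real.pi)).IsAddLeftInvariant)

/-- uniform approximation of continuous functions by trigonometric polynomials -/
lemma approx_unif (g : C(𝕋, ℂ)) {ε : ℝ} (hε : 0 < ε) :
    ∃ p ∈ Submodule.span ℂ (Set.range (fourier (T := 2 * Real.pi))), ∀ t, ‖g t - p t‖ ≤ ε := by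
  have h : g ∈ closure ((Submodule.span ℂ (Set.range (fourier (T := 2 * Real.pi))) :
      Submodule ℂ C(𝕋, ℂ)) : Set C(𝕋, ℂ)) := by
    rw [← Submodule.topologicalClosure_coe, span_fourier_closure_eq_top]; trivial
  obtain ⟨p, hp, hd⟩ := Metric.mem_closure_iff.1 h ε hε
  refine ⟨p, hp, fun t => ?_⟩
  rw [← dist_eq_norm]
  exact (ContinuousMap.dist_apply_le_dist t).trans hd.le

lemma approx_L1_cont {h : 𝕋 → ℂ} (hh : Integrable h μ) {ε : ℝ≥0∞} (hε : ε ≠ 0) :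
    ∃ g : C(𝕋, ℂ), ∫⁻ t, ‖h t - g t‖ₑ ∂μ ≤ ε := by
  obtain ⟨g, hg, -⟩ := (memLp_one_iff_integrable.2 hh).exists_boundedContinuous_eLpNorm_sub_le
    ENNReal.one_ne_top hε
  refine ⟨g.toContinuousMap, ?_⟩
  rw [eLpNorm_one_eq_lintegral_enorm] at hg
  exact hg

lemma approx_L1 {h : 𝕋 → ℂ} (hh : Integrable h μ) {ε : ℝ} (hε : 0 < ε) :
    ∃ p ∈ Submodule.span ℂ (Set.range (fourier (T := 2 * Real.pi))),
      ∫⁻ t, ‖h t - p t‖ₑ ∂μ ≤ ENNReal.ofReal ε := by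
  obtain ⟨g, hg⟩ := approx_L1_cont hh (ε := ENNReal.ofReal (ε / 2)) (by simpa using hε)
  obtain ⟨p, hp, hgp⟩ := approx_unif g (half_pos hε)
  refine ⟨p, hp, ?_⟩
  have h2 : ∫⁻ t, ‖g t - p t‖ₑ ∂μ ≤ ENNReal.ofReal (ε / 2) := by
    calc ∫⁻ t, ‖g t - p t‖ₑ ∂μ ≤ ∫⁻ t, ENNReal.ofReal (ε / 2) ∂μ := by
          refine lintegral_mono fun t => ?_
          rw [← ofReal_norm]
          exact ENNReal.ofReal_le_ofReal (hgp t)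
      _ = _ := by simp
  calc ∫⁻ t, ‖h t - p t‖ₑ ∂μ ≤ ∫⁻ t, (‖h t - g t‖ₑ + ‖g t - p t‖ₑ) ∂μ := by
        refine lintegral_mono fun t => ?_
        simpa using enorm_add_le (h t - g t) (g t - p t)
    _ = ∫⁻ t, ‖h t - g t‖ₑ ∂μ + ∫⁻ t, ‖g t - p t‖ₑ ∂μ := by
        apply lintegral_add_right'
        exact (g.continuous.sub p.continuous).measurable.enorm.aemeasurable
    _ ≤ ENNReal.ofReal (ε / 2) + ENNReal.ofReal (ε / 2) := add_le_add hg h2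
    _ = ENNReal.ofReal ε := by
        rw [← ENNReal.ofReal_add (by positivity) (by positivity)]; simp

/-- a sequence converging in `L¹` has an a.e. convergent subsequence -/
lemma subseq_ae {F : ℕ → 𝕋 → ℂ} {g : 𝕋 → ℂ} (hF : ∀ n, AEStronglyMeasurable (F n) μ)
    (hg : AEStronglyMeasurable g μ)
    (h : Tendsto (fun n => ∫⁻ t, ‖F n t - g t‖ₑ ∂μ) atTop (𝓝 0)) :
    ∃ ns : ℕ → ℕ, StrictMono ns ∧ ∀ᵐ x ∂μ, Tendsto (fun i => F (ns i) x) atTop (𝓝 (g x)) := by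
  apply TendstoInMeasure.exists_seq_tendsto_ae
  apply tendstoInMeasure_of_tendsto_eLpNorm one_ne_zero hF hg
  simp only [eLpNorm_one_eq_lintegral_enorm]
  exact h

/-- radial truncation -/
def clampC (M : ℝ) (z : ℂ) : ℂ := ((M / max M ‖z‖ : ℝ) : ℂ) * z

lemma clampC_cont {M : ℝ} (hM : 0 < M) : Continuous (clampC M) := by
  unfold clampC
  refine Continuous.mul ?_ continuous_id
  refine Complex.continuous_ofReal.comp ?_
  refine continuous_const.div (by fun_prop) fun z => ?_
  exact (lt_of_lt_of_le hM (le_max_left _ _)).ne'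

lemma clampC_norm {M : ℝ} (hM : 0 < M) (z : ℂ) : ‖clampC M z‖ ≤ M := by
  have h1 : 0 < max M ‖z‖ := lt_of_lt_of_le hM (le_max_left _ _)
  rw [clampC, norm_mul, Complex.norm_real, Real.norm_of_nonneg (by positivity), div_mul_eq_mul_div,
    div_le_iff₀ h1]
  exact mul_le_mul_of_nonneg_left (le_max_right _ _) hM.le

lemma clampC_eq {M : ℝ} (hM : 0 < M) {z : ℂ} (hz : ‖z‖ ≤ M) : clampC M z = z := by
  rw [clampC, max_eq_left hz, div_self hM.ne']; simp

/-- bounded functions are a.e. limits of uniformly bounded continuous functions -/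
lemma bdd_approx {f : 𝕋 → ℂ} (hf : AEStronglyMeasurable f μ) {M : ℝ} (hM : 0 < M)
    (hb : ∀ t, ‖f t‖ ≤ M) :
    ∃ g : ℕ → C(𝕋, ℂ), (∀ n t, ‖g n t‖ ≤ M) ∧
      ∀ᵐ t ∂μ, Tendsto (fun n => g n t) atTop (𝓝 (f t)) := by
  have hi : Integrable f μ := Integrable.of_bound hf M (Eventually.of_forall hb)
  have hε : ∀ n : ℕ, ENNReal.ofReal (1 / ((n : ℝ) + 1)) ≠ 0 := by
    intro n
    have : 0 < 1 / ((n : ℝ) + 1) := by positivity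
    simpa using this
  choose g hg using fun n : ℕ => approx_L1_cont hi (hε n)
  obtain ⟨ns, -, hns⟩ := subseq_ae (F := fun n => g n) (g := f)
    (fun n => (g n).continuous.aestronglyMeasurable) hf (by
      refine tendsto_of_tendsto_of_tendsto_of_le_of_le tendsto_const_nhds
        (h := fun n : ℕ => ENNReal.ofReal (1 / ((n : ℝ) + 1))) ?_ (fun _ => zero_le) ?_
      · have := ENNReal.tendsto_ofReal (tendsto_one_div_add_atTop_nhds_zero_nat (𝕜 := ℝ))
        simpa using this
      · intro n
        simp only [enorm_sub_rev _ (f _)]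
        exact hg n)
  refine ⟨fun n => ⟨fun t => clampC M (g (ns n) t), (clampC_cont hM).comp (g (ns n)).continuous⟩,
    fun n t => clampC_norm hM _, ?_⟩
  filter_upwards [hns] with t ht
  have := ((clampC_cont hM).tendsto (f t)).comp ht
  rw [clampC_eq hM (hb t)] at this
  exact this

/-- uniqueness of Fourier coefficients in `L¹` -/
lemma fourier_unique {f : 𝕋 → ℂ} (hf : Integrable f μ) (h0 : ∀ n : ℤ, fourierCoeff f n = 0) :
    f =ᵐ[μ] fun _ => 0 := by
  have h1 : ∀ p ∈ Submodule.span ℂ (Set.range (fourier (T := 2 * Real.pi))),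
      ∫ t, p t * f t ∂μ = 0 := by
    intro p hp
    have hi : ∀ p : C(𝕋, ℂ), Integrable (fun t => p t * f t) μ := fun p =>
      hf.bdd_mul p.continuous.aestronglyMeasurable (c := ‖p‖)
        (Eventually.of_forall fun t => p.norm_coe_le_norm t)
    induction hp using Submodule.span_induction with
    | mem x h =>
      obtain ⟨n, rfl⟩ := h
      have := h0 (-n)
      rw [fourierCoeff, neg_neg] at this
      exact this
    | zero => simp
    | add x y _ _ hx hy =>
      simp only [ContinuousMap.add_apply, add_mul]
      rw [integral_add (hi x) (hi y), hx, hy, add_zero]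
    | smul c x _ hx =>
      simp only [ContinuousMap.smul_apply, smul_eq_mul, mul_assoc]
      rw [integral_const_mul, hx, mul_zero]
  have h2 : ∀ g : C(𝕋, ℂ), ∫ t, g t * f t ∂μ = 0 := by
    intro g
    have hε : ∀ n : ℕ, 0 < (1 / ((n : ℝ) + 1)) := fun n => by positivity
    choose p hp hgp using fun n : ℕ => approx_unif g (hε n)
    have ht : Tendsto (fun n => ∫ t, p n t * f t ∂μ) atTop (𝓝 (∫ t, g t * f t ∂μ)) := by
      refine tendsto_integral_of_dominated_convergence (fun t => (‖g‖ + 1) * ‖f t‖)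
        (fun n => ((p n).continuous.aestronglyMeasurable).mul hf.1) (hf.norm.const_mul _) ?_ ?_
      · intro n
        refine Eventually.of_forall fun t => ?_
        rw [norm_mul]
        refine mul_le_mul_of_nonneg_right ?_ (norm_nonneg _)
        have a1 := hgp n t
        have a2 : 1 / ((n : ℝ) + 1) ≤ 1 := by
          rw [div_le_one (by positivity)]; linarith [(Nat.cast_nonneg n : (0 : ℝ) ≤ n)]
        have a3 := g.norm_coe_le_norm t
        have a4 := norm_sub_norm_le (p n t) (g t)
        rw [norm_sub_rev] at a4
        linarith
      · refine Eventually.of_forall fun t => ?_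
        refine Tendsto.mul ?_ tendsto_const_nhds
        rw [tendsto_iff_norm_sub_tendsto_zero]
        refine squeeze_zero (fun _ => norm_nonneg _) (fun n => ?_)
          (tendsto_one_div_add_atTop_nhds_zero_nat (𝕜 := ℝ))
        rw [norm_sub_rev]; exact hgp n t
    simp only [h1 _ (hp _)] at ht
    exact (tendsto_nhds_unique ht tendsto_const_nhds)
  -- test against the conjugate sign
  let s : 𝕋 → ℂ := fun t => conj (f t) * ((‖f t‖⁻¹ : ℝ) : ℂ)
  have hsm : AEStronglyMeasurable s μ := by
    refine AEStronglyMeasurable.mul ?_ ?_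
    · exact Complex.continuous_conj.comp_aestronglyMeasurable hf.1
    · exact (Complex.measurable_ofReal.comp_aemeasurable
        hf.1.norm.aemeasurable.inv).aestronglyMeasurable
  have hsb : ∀ t, ‖s t‖ ≤ 1 := by
    intro t
    simp only [s, norm_mul, RCLike.norm_conj, Complex.norm_real, norm_inv, norm_norm]
    exact mul_inv_le_one
  obtain ⟨g, hg1, hg2⟩ := bdd_approx hsm one_pos hsb
  have ht : Tendsto (fun n => ∫ t, g n t * f t ∂μ) atTop (𝓝 (∫ t, s t * f t ∂μ)) := by
    refine tendsto_integral_of_dominated_convergence (fun t => ‖f t‖)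
        (fun n => ((g n).continuous.aestronglyMeasurable).mul hf.1) hf.norm ?_ ?_
    · intro n
      refine Eventually.of_forall fun t => ?_
      rw [norm_mul]
      exact mul_le_of_le_one_left (norm_nonneg _) (hg1 n t)
    · filter_upwards [hg2] with t ht
      exact ht.mul tendsto_const_nhds
  simp only [h2] at ht
  have h3 := tendsto_nhds_unique ht tendsto_const_nhds
  have h4 : ∀ t, s t * f t = ((‖f t‖ : ℝ) : ℂ) := by
    intro t
    simp only [s]
    by_cases hz : f t = 0
    · simp [hz]
    · have : ((‖f t‖ : ℝ) : ℂ) ≠ 0 := by simpa using hz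
      rw [mul_right_comm, mul_comm (conj (f t)), Complex.mul_conj, Complex.normSq_eq_norm_sq]
      push_cast
      field_simp
  simp only [h4] at h3
  rw [integral_complex_ofReal] at h3
  have h5 : ∫ t, ‖f t‖ ∂μ = 0 := by exact_mod_cast h3
  rw [integral_eq_zero_iff_of_nonneg (fun t => norm_nonneg _) hf.norm] at h5
  filter_upwards [h5] with t ht
  simpa using ht

/-- averages over the rotations by multiples of `2π/n` -/
def rotAvg (n : ℕ) (h : 𝕋 → ℂ) : 𝕋 → ℂ := fun x =>
  (n : ℂ)⁻¹ * ∑ k ∈ Finset.range n, h (x + k • ((2 * Real.pi / n : ℝ) : 𝕋))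

lemma rotAvg_fourier {m : ℤ} (hm : m ≠ 0) {n : ℕ} (hn : m.natAbs < n) (x : 𝕋) :
    rotAvg n (fun t => fourier m t) x = 0 := by
  have hn0 : n ≠ 0 := by omega
  have hnC : (n : ℂ) ≠ 0 := by exact_mod_cast hn0
  have hpi : (Real.pi : ℂ) ≠ 0 := by exact_mod_cast Real.pi_ne_zero
  set u : 𝕋 := ((2 * Real.pi / n : ℝ) : 𝕋) with hu
  have hw : (fourier m u : ℂ) = Complex.exp (2 * Real.pi * Complex.I / n) ^ m := by
    rw [hu, fourier_coe_apply, ← Complex.exp_int_mul]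
    congr 1
    push_cast
    field_simp
  have hprim := Complex.isPrimitiveRoot_exp n hn0
  have hne : (fourier m u : ℂ) ≠ 1 := by
    rw [hw, Ne, hprim.zpow_eq_one_iff_dvd]
    intro hd
    have := Int.natAbs_dvd_natAbs.2 hd
    simp only [Int.natAbs_natCast] at this
    have := Nat.le_of_dvd (by omega) this
    omega
  have hpow : (fourier m u : ℂ) ^ n = 1 := by
    rw [hw, ← zpow_natCast, ← zpow_mul, mul_comm m, zpow_mul, zpow_natCast, hprim.pow_eq_one, one_zpow]
  have hk : ∀ k : ℕ, (fourier m (x + k • u) : ℂ) = fourier m x * (fourier m u : ℂ) ^ k := by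
    intro k
    simp only [fourier_apply]
    rw [smul_add, AddCircle.toCircle_add, smul_comm m k u, AddCircle.toCircle_nsmul]
    push_cast
    rfl
  simp only [rotAvg, hk, ← Finset.mul_sum, ← hu]
  have hg := mul_geom_sum (fourier m u : ℂ) n
  rw [hpow, sub_self] at hg
  rcases mul_eq_zero.1 hg with h | h
  · exact absurd (sub_eq_zero.1 h) hne
  · rw [h]; simp

lemma rotAvg_poly {p : C(𝕋, ℂ)}
    (hp : p ∈ Submodule.span ℂ (Set.range (fourier (T := 2 * Real.pi)))) :
    ∀ᶠ n : ℕ in atTop, ∀ x, rotAvg n p x = ∫ t, p t ∂μ := by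
  have hi : ∀ p : C(𝕋, ℂ), Integrable (fun t => p t) μ := fun p =>
      Integrable.of_bound p.continuous.aestronglyMeasurable ‖p‖
        (Eventually.of_forall fun t => p.norm_coe_le_norm t)
  induction hp using Submodule.span_induction with
  | mem x h =>
    obtain ⟨m, rfl⟩ := h
    by_cases hm : m = 0
    · subst hm
      filter_upwards [eventually_gt_atTop 0] with n hn x
      have : (n : ℂ) ≠ 0 := by exact_mod_cast hn.ne'
      simp only [rotAvg, fourier_zero]
      simp [this]
    · filter_upwards [eventually_gt_atTop m.natAbs] with n hn x
      rw [rotAvg_fourier hm hn]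
      have := congrFun (fourierCoeff_fourier (T := 2 * Real.pi) m) 0
      rw [fourierCoeff, Pi.single_eq_of_ne (Ne.symm hm)] at this
      simp only [neg_zero, fourier_zero, one_smul] at this
      exact this.symm
  | zero => exact Eventually.of_forall fun n x => by simp [rotAvg]
  | add f g _ _ hf hg =>
    filter_upwards [hf, hg] with n h1 h2 x
    simp only [ContinuousMap.add_apply]
    rw [integral_add (hi f) (hi g), ← h1 x, ← h2 x]
    simp [rotAvg, Finset.sum_add_distrib, mul_add]
  | smul c f _ hf =>
    filter_upwards [hf] with n h1 x
    simp only [ContinuousMap.smul_apply, smul_eq_mul]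
    rw [integral_const_mul, ← h1 x]
    simp only [rotAvg, ContinuousMap.coe_smul, Pi.smul_apply, smul_eq_mul, ← Finset.mul_sum]
    ring

lemma rotAvg_meas {h : 𝕋 → ℂ} (hh : AEStronglyMeasurable h μ) (n : ℕ) :
    AEStronglyMeasurable (rotAvg n h) μ := by
  refine AEStronglyMeasurable.const_mul ?_ _
  refine Finset.aestronglyMeasurable_fun_sum _ fun k _ => ?_
  exact hh.comp_quasiMeasurePreserving
    (measurePreserving_add_right μ _).quasiMeasurePreserving

lemma rotAvg_contr {h : 𝕋 → ℂ} (hh : AEStronglyMeasurable h μ) (n : ℕ) :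
    ∫⁻ t, ‖rotAvg n h t‖ₑ ∂μ ≤ ∫⁻ t, ‖h t‖ₑ ∂μ := by
  rcases Nat.eq_zero_or_pos n with rfl | hn
  · simp [rotAvg]
  calc ∫⁻ t, ‖rotAvg n h t‖ₑ ∂μ
      ≤ ∫⁻ t, (n : ℝ≥0∞)⁻¹ * ∑ k ∈ Finset.range n,
          ‖h (t + k • ((2 * Real.pi / n : ℝ) : 𝕋))‖ₑ ∂μ := by
        refine lintegral_mono fun t => ?_
        simp only [rotAvg, enorm_mul]
        have : ‖((n : ℂ)⁻¹)‖ₑ = (n : ℝ≥0∞)⁻¹ := by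
          rw [enorm_inv (by exact_mod_cast hn.ne')]
          congr 1
          rw [← ofReal_norm]; simp
        rw [this]
        gcongr
        exact enorm_sum_le _ _
    _ = (n : ℝ≥0∞)⁻¹ * ∑ k ∈ Finset.range n,
          ∫⁻ t, ‖h (t + k • ((2 * Real.pi / n : ℝ) : 𝕋))‖ₑ ∂μ := by
        have hm : ∀ k : ℕ, AEMeasurable
            (fun t => ‖h (t + k • ((2 * Real.pi / n : ℝ) : 𝕋))‖ₑ) μ := fun k =>
          (hh.comp_quasiMeasurePreserving
            (measurePreserving_add_right μ _).quasiMeasurePreserving).enorm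
        rw [lintegral_const_mul' _ _ (by simp [hn.ne']), lintegral_finsetSum' _ fun k _ => hm k]
    _ = (n : ℝ≥0∞)⁻¹ * ∑ k ∈ Finset.range n, ∫⁻ t, ‖h t‖ₑ ∂μ := by
        simp only [lintegral_add_right_eq_self (μ := μ) (fun t => ‖h t‖ₑ)]
    _ = ∫⁻ t, ‖h t‖ₑ ∂μ := by
        rw [Finset.sum_const, Finset.card_range, nsmul_eq_mul, ← mul_assoc,
          ENNReal.inv_mul_cancel (by simp [hn.ne']) (by simp), one_mul]

lemma rotAvg_tendsto {h : 𝕋 → ℂ} (hh : Integrable h μ) :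
    Tendsto (fun n => ∫⁻ t, ‖rotAvg n h t - ∫ s, h s ∂μ‖ₑ ∂μ) atTop (𝓝 0) := by
  rw [ENNReal.tendsto_nhds_zero]
  intro ε hε
  by_cases hεt : ε = ⊤
  · simp [hεt]
  have hε' : 0 < ε.toReal := ENNReal.toReal_pos hε.ne' hεt
  obtain ⟨p, hp, hd⟩ := approx_L1 hh (half_pos hε')
  have hpi : Integrable (fun t => p t) μ :=
      Integrable.of_bound p.continuous.aestronglyMeasurable ‖p‖
        (Eventually.of_forall fun t => p.norm_coe_le_norm t)
  have hdm : AEStronglyMeasurable (fun t => h t - p t) μ := hh.1.sub hpi.1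
  filter_upwards [rotAvg_poly hp] with n hn
  have hc : ‖(∫ s, p s ∂μ) - ∫ s, h s ∂μ‖ₑ ≤ ENNReal.ofReal (ε.toReal / 2) := by
    rw [← integral_sub hpi hh]
    refine (enorm_integral_le_lintegral_enorm _).trans ?_
    simp only [enorm_sub_rev _ (h _)]
    exact hd
  calc ∫⁻ t, ‖rotAvg n h t - ∫ s, h s ∂μ‖ₑ ∂μ
      ≤ ∫⁻ t, (‖rotAvg n (fun t => h t - p t) t‖ₑ + ‖(∫ s, p s ∂μ) - ∫ s, h s ∂μ‖ₑ) ∂μ := by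
        refine lintegral_mono fun t => ?_
        refine le_trans (le_of_eq ?_) (enorm_add_le _ _)
        congr 1
        rw [← hn t]
        simp only [rotAvg, Finset.sum_sub_distrib]
        ring
    _ = ∫⁻ t, ‖rotAvg n (fun t => h t - p t) t‖ₑ ∂μ + ‖(∫ s, p s ∂μ) - ∫ s, h s ∂μ‖ₑ := by
        rw [lintegral_add_right' _ aemeasurable_const]; simp
    _ ≤ ENNReal.ofReal (ε.toReal / 2) + ENNReal.ofReal (ε.toReal / 2) :=
        add_le_add ((rotAvg_contr hdm n).trans hd) hc
    _ = ε := by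
        rw [← ENNReal.ofReal_add (by positivity) (by positivity), add_halves,
          ENNReal.ofReal_toReal hεt]

lemma BFS.zero (Y : BFS) : Y.N (fun _ => 0) = 0 := by
  have := Y.smul_eq 0 (fun _ => 0)
  simpa using this

lemma BFS.one_ne_zero (Y : BFS) : Y.N (fun _ => 1) ≠ 0 := by
  intro h
  have := Y.norm_eq_zero _ aestronglyMeasurable_const h
  obtain ⟨t, ht⟩ := this.exists
  exact _root_.one_ne_zero ht

lemma BFS.sum_le (Y : BFS) (f : ℕ → 𝕋 → ℂ) (n : ℕ) :
    Y.N (fun t => ∑ k ∈ Finset.range n, f k t) ≤ ∑ k ∈ Finset.range n, Y.N (f k) := by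
  induction n with
  | zero => simp [Y.zero]
  | succ n ih =>
    simp only [Finset.sum_range_succ]
    exact (Y.add_le (fun t => ∑ k ∈ Finset.range n, f k t) (f n)).trans (by gcongr)

lemma BFS.rotAvg_le (Y : BFS) (hri : RearrInvN Y.N) {h : 𝕋 → ℂ} (hh : AEStronglyMeasurable h μ)
    (n : ℕ) : Y.N (rotAvg n h) ≤ Y.N h := by
  rcases Nat.eq_zero_or_pos n with rfl | hn
  · have : rotAvg 0 h = fun _ => 0 := by funext x; simp [rotAvg]
    rw [this, Y.zero]; exact zero_le
  have hs : ∀ c : 𝕋, Y.N (fun t => h (t + c)) = Y.N h := by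
    intro c
    refine hri _ _ (hh.comp_quasiMeasurePreserving
      (measurePreserving_add_right μ _).quasiMeasurePreserving) hh fun lam _ => ?_
    exact measure_preimage_add_right μ c {t | lam < ‖h t‖}
  unfold rotAvg
  rw [Y.smul_eq]
  have h1 := Y.sum_le (fun k t => h (t + k • ((2 * Real.pi / n : ℝ) : 𝕋))) n
  simp only [hs, Finset.sum_const, Finset.card_range, nsmul_eq_mul] at h1
  have : ((‖((n : ℂ)⁻¹)‖₊ : NNReal) : ℝ≥0∞) = (n : ℝ≥0∞)⁻¹ := by
    rw [nnnorm_inv, ENNReal.coe_inv (by simpa using hn.ne')]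
    simp
  rw [this]
  calc _ ≤ (n : ℝ≥0∞)⁻¹ * (n * Y.N h) := by gcongr
    _ = Y.N h := by
      rw [← mul_assoc, ENNReal.inv_mul_cancel (by simp [hn.ne']) (by simp), one_mul]

lemma BFS.L1_le_bdd (Y : BFS) (hri : RearrInvN Y.N) {h : 𝕋 → ℂ} (hh : Integrable h μ) :
    ‖∫ t, h t ∂μ‖ₑ * Y.N (fun _ => 1) ≤ Y.N h := by
  set c : ℂ := ∫ t, h t ∂μ with hc
  obtain ⟨ns, -, hns⟩ := subseq_ae (F := fun n => rotAvg n h) (g := fun _ => c)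
    (fun n => rotAvg_meas hh.1 n) aestronglyMeasurable_const (rotAvg_tendsto hh)
  let G : ℕ → 𝕋 → ℂ := fun n t => ((⨅ m : ℕ, min ‖rotAvg (ns (n + m)) h t‖ ‖c‖ : ℝ) : ℂ)
  have hbdd : ∀ n t, BddBelow (Set.range fun m : ℕ => min ‖rotAvg (ns (n + m)) h t‖ ‖c‖) := by
    intro n t
    refine ⟨0, ?_⟩
    rintro _ ⟨m, rfl⟩
    positivity
  have hnn : ∀ n t, 0 ≤ ⨅ m : ℕ, min ‖rotAvg (ns (n + m)) h t‖ ‖c‖ := fun n t =>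
    le_ciInf fun m => by positivity
  have hGn : ∀ n t, ‖G n t‖ = ⨅ m : ℕ, min ‖rotAvg (ns (n + m)) h t‖ ‖c‖ := by
    intro n t
    simp only [G, Complex.norm_real]
    exact Real.norm_of_nonneg (hnn n t)
  have hGm : ∀ n, AEStronglyMeasurable (G n) μ := by
    intro n
    refine (Complex.measurable_ofReal.comp_aemeasurable ?_).aestronglyMeasurable
    refine AEMeasurable.iInf fun m => ?_
    exact (rotAvg_meas hh.1 _).norm.aemeasurable.min aemeasurable_const
  have key := Y.semiFatou G (fun _ => c * 1) hGm aestronglyMeasurable_const (by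
    filter_upwards [hns] with t ht
    simp only [hGn]
    constructor
    · intro n n' hnn'
      refine le_ciInf fun m => ?_
      refine (ciInf_le (hbdd n t) (n' - n + m)).trans (le_of_eq ?_)
      rw [show n + (n' - n + m) = n' + m by omega]
    · rw [mul_one, Metric.tendsto_atTop]
      intro ε hε
      obtain ⟨n0, hn0⟩ := Metric.tendsto_atTop.1 ht.norm (ε / 2) (half_pos hε)
      refine ⟨n0, fun n hn => ?_⟩
      have h1 : (⨅ m : ℕ, min ‖rotAvg (ns (n + m)) h t‖ ‖c‖) ≤ ‖c‖ :=
        (ciInf_le (hbdd n t) 0).trans (min_le_right _ _)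
      have h2 : ‖c‖ - ε / 2 ≤ ⨅ m : ℕ, min ‖rotAvg (ns (n + m)) h t‖ ‖c‖ := by
        refine le_ciInf fun m => le_min ?_ (by linarith)
        have := hn0 (n + m) (by omega)
        rw [Real.dist_eq, abs_lt] at this
        linarith
      rw [Real.dist_eq, abs_lt]
      constructor <;> linarith)
    (by rw [Y.smul_eq]; exact ENNReal.mul_lt_top ENNReal.coe_lt_top Y.const_finite)
  rw [Y.smul_eq] at key
  change (‖c‖₊ : ℝ≥0∞) * _ ≤ _
  rw [key]
  refine iSup_le fun n => ?_
  refine le_trans ?_ (Y.rotAvg_le hri hh.1 (ns n))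
  refine Y.ideal _ _ (hGm n) (Eventually.of_forall fun t => ?_)
  rw [hGn]
  exact (ciInf_le (hbdd n t) 0).trans (min_le_left _ _)

lemma BFS.L1_le (Y : BFS) (hri : RearrInvN Y.N) {f : 𝕋 → ℂ} (hf : AEStronglyMeasurable f μ) :
    (∫⁻ t, ‖f t‖ₑ ∂μ) * Y.N (fun _ => 1) ≤ Y.N f := by
  have hb : ∀ M : ℕ, (∫⁻ t, min ‖f t‖ₑ M ∂μ) * Y.N (fun _ => 1) ≤ Y.N f := by
    intro M
    let h : 𝕋 → ℂ := fun t => ((min ‖f t‖ M : ℝ) : ℂ)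
    have hnn : ∀ t, 0 ≤ min ‖f t‖ (M : ℝ) := fun t => by positivity
    have hhn : ∀ t, ‖h t‖ = min ‖f t‖ M := fun t => by
      simp only [h, Complex.norm_real]; exact Real.norm_of_nonneg (hnn t)
    have hrm : AEStronglyMeasurable (fun t => min ‖f t‖ (M : ℝ)) μ :=
      (hf.norm.aemeasurable.min aemeasurable_const).aestronglyMeasurable
    have hri' : Integrable (fun t => min ‖f t‖ (M : ℝ)) μ :=
      Integrable.of_bound hrm M (Eventually.of_forall fun t => by
        rw [Real.norm_of_nonneg (hnn t)]; exact min_le_right _ _)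
    have hi : Integrable h μ := hri'.ofReal
    refine le_trans (le_of_eq ?_) ((Y.L1_le_bdd hri hi).trans
      (Y.ideal _ _ hi.1 (Eventually.of_forall fun t => (hhn t).le.trans (min_le_left _ _))))
    congr 1
    simp only [h]
    rw [integral_complex_ofReal, ← ofReal_norm, Complex.norm_real,
      Real.norm_of_nonneg (integral_nonneg hnn),
      ofReal_integral_eq_lintegral_ofReal hri' (Eventually.of_forall hnn)]
    refine lintegral_congr fun t => ?_
    rw [← ofReal_norm, ENNReal.ofReal_min]
    simp
  have hsup : ∫⁻ t, ‖f t‖ₑ ∂μ = ⨆ M : ℕ, ∫⁻ t, min ‖f t‖ₑ M ∂μ := by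
    rw [← lintegral_iSup' (fun M => hf.enorm.min aemeasurable_const)
      (Eventually.of_forall fun t i j hij => min_le_min le_rfl (by exact_mod_cast hij))]
    refine lintegral_congr fun t => ?_
    refine le_antisymm ?_ (iSup_le fun M => min_le_left _ _)
    obtain ⟨M, hM⟩ := ENNReal.exists_nat_gt (enorm_ne_top (x := f t))
    exact (le_min le_rfl hM.le).trans (le_iSup (fun M : ℕ => min ‖f t‖ₑ (M : ℝ≥0∞)) M)
  rw [hsup, ENNReal.iSup_mul]
  exact iSup_le hb

lemma BFS.bdd_le (X : BFS) {f : 𝕋 → ℂ} (hf : AEStronglyMeasurable f μ) {M : ℝ} (hM : 0 ≤ M)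
    (hb : ∀ t, ‖f t‖ ≤ M) : X.N f ≤ ENNReal.ofReal M * X.N (fun _ => 1) := by
  have h1 := X.ideal (fun _ => (M : ℂ) * 1) f hf (Eventually.of_forall fun t => by
    simpa [abs_of_nonneg hM] using hb t)
  rw [X.smul_eq] at h1
  refine h1.trans (le_of_eq ?_)
  congr 1
  change ‖(M : ℂ)‖ₑ = _
  rw [← ofReal_norm, Complex.norm_real, Real.norm_of_nonneg hM]

lemma BFS.mem_bdd (X : BFS) {f : 𝕋 → ℂ} (hf : AEStronglyMeasurable f μ) {M : ℝ} (hM : 0 ≤ M)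
    (hb : ∀ t, ‖f t‖ ≤ M) : MemN X.N f :=
  ⟨hf, (X.bdd_le hf hM hb).trans_lt (ENNReal.mul_lt_top ENNReal.ofReal_lt_top X.const_finite)⟩

lemma BFS.mem_cont (X : BFS) (g : C(𝕋, ℂ)) : MemN X.N (fun t => g t) :=
  X.mem_bdd g.continuous.aestronglyMeasurable (norm_nonneg g) fun t => g.norm_coe_le_norm t

lemma BFS.mem_smul (X : BFS) (c : ℂ) {f : 𝕋 → ℂ} (hf : MemN X.N f) :
    MemN X.N (fun t => c * f t) :=
  ⟨hf.1.const_mul c, by rw [X.smul_eq]; exact ENNReal.mul_lt_top ENNReal.coe_lt_top hf.2⟩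

lemma BFS.mem_add (X : BFS) {f g : 𝕋 → ℂ} (hf : MemN X.N f) (hg : MemN X.N g) :
    MemN X.N (f + g) :=
  ⟨hf.1.add hg.1, (X.add_le f g).trans_lt (ENNReal.add_lt_top.2 ⟨hf.2, hg.2⟩)⟩

lemma BFS.integrable (Y : BFS) (hri : RearrInvN Y.N) {f : 𝕋 → ℂ} (hf : MemN Y.N f) :
    Integrable f μ := by
  refine ⟨hf.1, ?_⟩
  have h := (Y.L1_le hri hf.1).trans_lt hf.2
  rw [hasFiniteIntegral_iff_enorm]
  by_contra h'
  rw [not_lt, top_le_iff] at h'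
  rw [h', ENNReal.top_mul Y.one_ne_zero] at h
  exact lt_irrefl _ h

/-- If a bounded linear operator `A : X → Y` between rearrangement-invariant
Banach function spaces (with `X` separable) has a Laurent (multiplication) matrix
`⟨Aχ_j, χ_k⟩ = a_{k-j}` for all `j,k ∈ ℤ`, then `A` is multiplication by a function
`a ∈ M(X,Y)` whose Fourier coefficients are the `a_n`. -/
theorem laurent_matrix_is_multiplication (X Y : BFS) (hriX : RearrInvN X.N)
    (hriY : RearrInvN Y.N) (hoc : OrderContN X.N)
    (A : (𝕋 → ℂ) → (𝕋 → ℂ))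
    (hA_ae : ∀ f g, f =ᵐ[μ] g → A f =ᵐ[μ] A g)
    (hA_add : ∀ f g, MemN X.N f → MemN X.N g → A (f + g) =ᵐ[μ] A f + A g)
    (hA_smul : ∀ (c : ℂ) f, MemN X.N f → A (fun t => c * f t) =ᵐ[μ] fun t => c * A f t)
    (hA_mem : ∀ f, MemN X.N f → MemN Y.N (A f))
    (C : ℝ≥0∞) (hC : C < ⊤) (hA_bdd : ∀ f, MemN X.N f → Y.N (A f) ≤ C * X.N f)
    (a : ℤ → ℂ)
    (hmat : ∀ j k : ℤ, fourierCoeff (A fun x => fourier j x) k = a (k - j)) :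
    ∃ m : 𝕋 → ℂ, AEStronglyMeasurable m μ ∧
      (∀ f, MemN X.N f → MemN Y.N (fun t => m t * f t)) ∧
      (∀ n : ℤ, fourierCoeff m n = a n) ∧
      (∀ f, MemN X.N f → A f =ᵐ[μ] fun t => m t * f t) := by
  set m : 𝕋 → ℂ := A (fun x => fourier 0 x) with hm
  have hmY : MemN Y.N m := hA_mem _ (X.mem_cont (fourier 0))
  have hmi : Integrable m μ := Y.integrable hriY hmY
  have hmc : ∀ n : ℤ, fourierCoeff m n = a n := by
    intro n
    rw [hm, hmat 0 n, sub_zero]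
  -- closure property
  have closure_step : ∀ (F : ℕ → 𝕋 → ℂ) (f : 𝕋 → ℂ), (∀ n, MemN X.N (F n)) → MemN X.N f →
      (∀ n, A (F n) =ᵐ[μ] fun t => m t * F n t) →
      (∀ᵐ t ∂μ, Tendsto (fun n => F n t) atTop (𝓝 (f t))) →
      Tendsto (fun n => X.N (fun t => F n t - f t)) atTop (𝓝 0) →
      A f =ᵐ[μ] fun t => m t * f t := by
    intro F f hF hf hAF hlim hN
    have hsub : ∀ n, A (fun t => F n t - f t) =ᵐ[μ] fun t => A (F n) t - A f t := by
      intro n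
      have e : (fun t => F n t - f t) = F n + fun t => (-1 : ℂ) * f t := by
        funext t; simp [sub_eq_add_neg]
      rw [e]
      filter_upwards [hA_add _ _ (hF n) (X.mem_smul (-1) hf), hA_smul (-1) f hf] with t h1 h2
      rw [h1, Pi.add_apply, h2]; ring
    have hmemsub : ∀ n, MemN X.N (fun t => F n t - f t) := by
      intro n
      have e : (fun t => F n t - f t) = F n + fun t => (-1 : ℂ) * f t := by
        funext t; simp [sub_eq_add_neg]
      rw [e]
      exact X.mem_add (hF n) (X.mem_smul (-1) hf)
    have hL : ∀ n, ∫⁻ t, ‖A (F n) t - A f t‖ₑ ∂μ ≤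
        C * X.N (fun t => F n t - f t) * (Y.N (fun _ => 1))⁻¹ := by
      intro n
      have h1 := (Y.L1_le hriY (hA_mem _ (hmemsub n)).1).trans (hA_bdd _ (hmemsub n))
      rw [lintegral_congr_ae ((hsub n).mono fun t ht => by rw [ht])] at h1
      rw [← div_eq_mul_inv, ENNReal.le_div_iff_mul_le (Or.inl Y.one_ne_zero)
        (Or.inl Y.const_finite.ne)]
      exact h1
    obtain ⟨ns, hns, hae⟩ := subseq_ae (F := fun n => A (F n)) (g := A f)
      (fun n => (hA_mem _ (hF n)).1) (hA_mem _ hf).1 (by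
        refine tendsto_of_tendsto_of_tendsto_of_le_of_le tendsto_const_nhds
          (h := fun n => C * X.N (fun t => F n t - f t) * (Y.N (fun _ => 1))⁻¹) ?_
          (fun _ => zero_le) hL
        have := ENNReal.Tendsto.mul_const (b := (Y.N (fun _ => 1))⁻¹)
          (ENNReal.Tendsto.const_mul (a := C) hN (Or.inr hC.ne))
          (Or.inr (ENNReal.inv_ne_top.2 Y.one_ne_zero))
        simpa using this)
    filter_upwards [hae, hlim, ae_all_iff.2 hAF] with t h1 h2 h3
    simp only [h3] at h1
    exact tendsto_nhds_unique h1 ((h2.comp hns.tendsto_atTop).const_mul (m t))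
  -- characters
  have hchar : ∀ j : ℤ, A (fun t => fourier j t) =ᵐ[μ] fun t => m t * fourier j t := by
    intro j
    have hi1 : Integrable (A fun t => fourier j t) μ :=
      Y.integrable hriY (hA_mem _ (X.mem_cont (fourier j)))
    have hi2 : Integrable (fun t => fourier j t * m t) μ :=
      hmi.bdd_mul (fourier j).continuous.aestronglyMeasurable (c := ‖fourier (T := 2 * Real.pi) j‖)
        (Eventually.of_forall fun t => (fourier j).norm_coe_le_norm t)
    have h0 := fourier_unique (hi1.sub hi2) (by
      intro n
      have e1 : fourierCoeff (fun t => fourier j t * m t) n = a (n - j) := by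
        rw [← hmc]
        simp only [fourierCoeff, smul_eq_mul, ← mul_assoc, ← fourier_add]
        congr 1
        funext t
        rw [show -n + j = -(n - j) by ring]
      have e2 : fourierCoeff ((A fun t => fourier j t) - fun t => fourier j t * m t) n
          = fourierCoeff (A fun t => fourier j t) n
            - fourierCoeff (fun t => fourier j t * m t) n := by
        simp only [fourierCoeff, Pi.sub_apply, smul_sub]
        exact integral_sub (hi1.fourier_smul (-n)) (hi2.fourier_smul (-n))
      rw [e2, e1, hmat, sub_self])
    filter_upwards [h0] with t ht
    rw [Pi.sub_apply, sub_eq_zero] at ht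
    rw [ht, mul_comm]
  -- trigonometric polynomials
  have hpoly : ∀ p ∈ Submodule.span ℂ (Set.range (fourier (T := 2 * Real.pi))),
      A (fun t => p t) =ᵐ[μ] fun t => m t * p t := by
    intro p hp
    induction hp using Submodule.span_induction with
    | mem x h =>
      obtain ⟨j, rfl⟩ := h
      exact hchar j
    | zero =>
      have := hA_smul 0 _ (X.mem_cont (fourier 0))
      simpa using this
    | add f g _ _ hf hg =>
      filter_upwards [hf, hg, hA_add _ _ (X.mem_cont f) (X.mem_cont g)] with t h1 h2 h3
      change A ((fun t => f t) + fun t => g t) t = m t * (f t + g t)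
      rw [h3, Pi.add_apply, h1, h2]; ring
    | smul c f _ hf =>
      filter_upwards [hf, hA_smul c _ (X.mem_cont f)] with t h1 h2
      change A (fun t => c * f t) t = m t * (c * f t)
      rw [h2, h1]; ring
  -- continuous functions
  have hcont : ∀ g : C(𝕋, ℂ), A (fun t => g t) =ᵐ[μ] fun t => m t * g t := by
    intro g
    have hε : ∀ n : ℕ, 0 < (1 / ((n : ℝ) + 1)) := fun n => by positivity
    choose p hp hgp using fun n : ℕ => approx_unif g (hε n)
    refine closure_step (fun n t => p n t) _ (fun n => X.mem_cont (p n)) (X.mem_cont g)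
      (fun n => hpoly _ (hp n)) ?_ ?_
    · refine Eventually.of_forall fun t => ?_
      rw [tendsto_iff_norm_sub_tendsto_zero]
      refine squeeze_zero (fun _ => norm_nonneg _) (fun n => ?_)
        (tendsto_one_div_add_atTop_nhds_zero_nat (𝕜 := ℝ))
      rw [norm_sub_rev]; exact hgp n t
    · refine tendsto_of_tendsto_of_tendsto_of_le_of_le tendsto_const_nhds
        (h := fun n : ℕ => ENNReal.ofReal (1 / ((n : ℝ) + 1)) * X.N (fun _ => 1)) ?_
        (fun _ => zero_le) ?_
      · have := ENNReal.Tendsto.mul_const (b := X.N (fun _ => 1))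
          (ENNReal.tendsto_ofReal (tendsto_one_div_add_atTop_nhds_zero_nat (𝕜 := ℝ)))
          (Or.inr X.const_finite.ne)
        simpa using this
      · intro n
        refine X.bdd_le ((p n).continuous.sub g.continuous).aestronglyMeasurable (hε n).le ?_
        intro t
        rw [Pi.sub_apply, norm_sub_rev]; exact hgp n t
  -- bounded functions
  have hbdd : ∀ (f : 𝕋 → ℂ) (M : ℝ), 0 < M → AEStronglyMeasurable f μ → (∀ t, ‖f t‖ ≤ M) →
      A f =ᵐ[μ] fun t => m t * f t := by
    intro f M hM hf hb
    obtain ⟨g, hg1, hg2⟩ := bdd_approx hf hM hb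
    refine closure_step (fun n t => g n t) f (fun n => X.mem_cont (g n))
      (X.mem_bdd hf hM.le hb) (fun n => hcont (g n)) hg2 ?_
    have hcm : MemN X.N (fun _ => ((2 * M : ℝ) : ℂ)) :=
      X.mem_bdd aestronglyMeasurable_const (norm_nonneg _) fun t => le_rfl
    refine (hoc _ hcm).2 _ (fun n => (g n).continuous.aestronglyMeasurable.sub hf) ?_ ?_
    · intro n
      refine Eventually.of_forall fun t => ?_
      rw [Complex.norm_real, Real.norm_of_nonneg (by positivity)]
      refine (norm_sub_le _ _).trans ?_
      linarith [hg1 n t, hb t]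
    · filter_upwards [hg2] with t ht
      exact tendsto_iff_norm_sub_tendsto_zero.1 ht
  -- general functions
  have hgen : ∀ f, MemN X.N f → A f =ᵐ[μ] fun t => m t * f t := by
    intro f hf
    have hpos : ∀ n : ℕ, (0 : ℝ) < (n : ℝ) + 1 := fun n => by positivity
    have hFm : ∀ n : ℕ, AEStronglyMeasurable (fun t => clampC ((n : ℝ) + 1) (f t)) μ := fun n =>
      (clampC_cont (hpos n)).comp_aestronglyMeasurable hf.1
    have hFeq : ∀ t, ∀ᶠ n : ℕ in atTop, clampC ((n : ℝ) + 1) (f t) = f t := by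
      intro t
      obtain ⟨N, hN⟩ := exists_nat_ge ‖f t‖
      filter_upwards [eventually_ge_atTop N] with n hn
      refine clampC_eq (hpos n) ?_
      have : (N : ℝ) ≤ n := by exact_mod_cast hn
      linarith
    refine closure_step (fun n t => clampC ((n : ℝ) + 1) (f t)) f
      (fun n => X.mem_bdd (hFm n) (hpos n).le fun t => clampC_norm (hpos n) _) hf
      (fun n => hbdd _ _ (hpos n) (hFm n) fun t => clampC_norm (hpos n) _)
      (Eventually.of_forall fun t => tendsto_const_nhds.congr' ((hFeq t).mono fun n h => h.symm)) ?_
    refine (hoc f hf).2 _ (fun n => (hFm n).sub hf.1) ?_ ?_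
    · intro n
      refine Eventually.of_forall fun t => ?_
      have hmx : 0 < max ((n : ℝ) + 1) ‖f t‖ := lt_of_lt_of_le (hpos n) (le_max_left _ _)
      have hr : ((n : ℝ) + 1) / max ((n : ℝ) + 1) ‖f t‖ ≤ 1 :=
        (div_le_one hmx).2 (le_max_left _ _)
      have hr0 : 0 ≤ ((n : ℝ) + 1) / max ((n : ℝ) + 1) ‖f t‖ := by positivity
      have e : clampC ((n : ℝ) + 1) (f t) - f t =
          ((((n : ℝ) + 1) / max ((n : ℝ) + 1) ‖f t‖ - 1 : ℝ) : ℂ) * f t := by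
        rw [clampC]; push_cast; ring
      rw [e, norm_mul, Complex.norm_real]
      refine mul_le_of_le_one_left (norm_nonneg _) ?_
      rw [Real.norm_eq_abs, abs_le]
      constructor <;> linarith
    · refine Eventually.of_forall fun t => ?_
      refine tendsto_const_nhds.congr' ((hFeq t).mono fun n h => ?_)
      simp [h]
  refine ⟨m, hmY.1, fun f hf => ?_, hmc, hgen⟩
  refine ⟨hmY.1.mul hf.1, ?_⟩
  rw [← Y.ae_congr _ _ (hgen f hf)]
  exact (hA_mem f hf).2
end
end
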